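/- arXiv:2605.20953 — 6 statements merged into one kernel-verified Lean document; each statement's English description precedes it below -/
import Mathlib

section
/- Let α be an irrational real number, λ = exp(2πiα), and let (m_k), (F_k) be given by the Master recursion. Suppose the power series m(x) = Σ_{k≥1} m_k x^k has radius of convergence R > 0. Then for every complex x with |x| < R one has F(x) := Σ_{k≥0} F_k x^k = exp(m(x)) and m satisfies the functional equation m(λx) − 2m(x) + m(x/λ) = −x·exp(m(x)). -/
/-- `D α k = 2(1 - cos(2πkα))`, the small denominator of the Master recursion. -/
noncomputable def D (α : ℝ) (k : ℕ) : ℝ := 2 * (1 - Real.cos (2 * Real.pi * k * α))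

/-- The termwise derivative of a complex power series converges absolutely in the open disc of
convergence, and it is the derivative of the sum there. -/
theorem hasDerivAt_tsum_mul_pow {c : ℕ → ℂ} {R : ℝ}
    (hc : ∀ z : ℂ, ‖z‖ < R → Summable fun k : ℕ => c k * z ^ k) {z : ℂ} (hz : ‖z‖ < R) :
    (Summable fun k : ℕ => ‖((k : ℂ) + 1) * c (k + 1) * z ^ k‖) ∧
      HasDerivAt (fun w : ℂ => ∑' k : ℕ, c k * w ^ k)
        (∑' k : ℕ, ((k : ℂ) + 1) * c (k + 1) * z ^ k) z := by
  obtain ⟨r, hzr, hrR⟩ := exists_between hz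
  obtain ⟨ρ, hrρ, hρR⟩ := exists_between hrR
  have hr : 0 < r := (norm_nonneg z).trans_lt hzr
  have hρ : 0 < ρ := hr.trans hrρ
  have hcρ : Summable fun k : ℕ => c k * (ρ : ℂ) ^ k :=
    hc ρ (by simpa [abs_of_pos hρ] using hρR)
  obtain ⟨C, hC⟩ := hcρ.tendsto_atTop_zero.norm.bddAbove_range
  have hbound : ∀ k, ‖c k‖ * ρ ^ k ≤ C := fun k => by
    have := hC ⟨k, rfl⟩
    simpa [abs_of_pos hρ] using this
  set u : ℕ → ℝ := fun k => C / r * ((k : ℝ) ^ 1 * (r / ρ) ^ k) with hu_def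
  have hu : Summable u := by
    have hq : ‖r / ρ‖ < 1 := by
      rw [Real.norm_of_nonneg (by positivity)]
      exact (div_lt_one hρ).2 hrρ
    exact (summable_pow_mul_geometric_of_norm_lt_one 1 hq).mul_left (C / r)
  have hle : ∀ (k : ℕ) (w : ℂ), w ∈ Metric.ball (0 : ℂ) r →
      ‖c k * ((k : ℂ) * w ^ (k - 1))‖ ≤ u k := by
    intro k w hw
    rw [mem_ball_zero_iff] at hw
    rcases k with _ | k
    · simp [hu_def]
    · have hw' : ‖w‖ ^ k ≤ r ^ k := by gcongr
      have hck : ‖c (k + 1)‖ ≤ C / ρ ^ (k + 1) := (le_div_iff₀ (by positivity)).2 (hbound _)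
      calc ‖c (k + 1) * (((k + 1 : ℕ) : ℂ) * w ^ (k + 1 - 1))‖
          = ‖c (k + 1)‖ * (((k + 1 : ℕ) : ℝ) * ‖w‖ ^ k) := by
            rw [norm_mul, norm_mul, norm_pow, Complex.norm_natCast, Nat.add_sub_cancel]
        _ ≤ C / ρ ^ (k + 1) * (((k + 1 : ℕ) : ℝ) * r ^ k) := by
            gcongr
            exact (norm_nonneg _).trans hck
        _ = u (k + 1) := by
            simp only [hu_def, div_pow, pow_one, pow_succ r]
            field_simp
  have hzmem : z ∈ Metric.ball (0 : ℂ) r := by simpa using hzr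
  have hsum : Summable fun k : ℕ => ‖c k * ((k : ℂ) * z ^ (k - 1))‖ :=
    Summable.of_nonneg_of_le (fun _ => norm_nonneg _) (fun k => hle k z hzmem) hu
  have hder := hasDerivAt_tsum_of_isPreconnected hu Metric.isOpen_ball
    (convex_ball (0 : ℂ) r).isPreconnected
    (fun k w _ => (hasDerivAt_pow k w).const_mul (c k)) hle
    (Metric.mem_ball_self hr) (hc 0 (by simpa using hr.trans hrR)) hzmem
  have hshift : ∀ k : ℕ, c (k + 1) * (((k + 1 : ℕ) : ℂ) * z ^ (k + 1 - 1))
      = ((k : ℂ) + 1) * c (k + 1) * z ^ k := fun k => by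
    rw [Nat.add_sub_cancel]; push_cast; ring
  refine ⟨by simpa only [hshift] using (summable_nat_add_iff 1).2 hsum, ?_⟩
  rw [hsum.of_norm.tsum_eq_zero_add] at hder
  simpa only [hshift, Nat.cast_zero, zero_mul, mul_zero, zero_add] using hder

/-- A power series `f` with `f(0) = 1` whose coefficients satisfy the recursion encoding
`f' = g' f`, where `g(0) = 0`, is the exponential of `g`. -/
theorem tsum_mul_pow_eq_exp {a b : ℕ → ℂ} {R : ℝ}
    (ha : ∀ z : ℂ, ‖z‖ < R → Summable fun k : ℕ => a k * z ^ k)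
    (hb : ∀ z : ℂ, ‖z‖ < R → Summable fun k : ℕ => b k * z ^ k)
    (ha0 : a 0 = 0) (hb0 : b 0 = 1)
    (hab : ∀ n : ℕ, ((n : ℂ) + 1) * b (n + 1)
      = ∑ p ∈ Finset.HasAntidiagonal.antidiagonal n, ((p.1 : ℂ) + 1) * a (p.1 + 1) * b p.2)
    {x : ℂ} (hx : ‖x‖ < R) :
    ∑' k : ℕ, b k * x ^ k = Complex.exp (∑' k : ℕ, a k * x ^ k) := by
  have hode : ∀ z : ℂ, ‖z‖ < R → ∑' k : ℕ, ((k : ℂ) + 1) * b (k + 1) * z ^ k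
      = (∑' k : ℕ, ((k : ℂ) + 1) * a (k + 1) * z ^ k) * ∑' k : ℕ, b k * z ^ k := by
    intro z hz
    rw [tsum_mul_tsum_eq_tsum_sum_antidiagonal_of_summable_norm
      (hasDerivAt_tsum_mul_pow ha hz).1 (hb z hz).norm]
    refine tsum_congr fun n => ?_
    rw [hab, Finset.sum_mul]
    refine Finset.sum_congr rfl fun p hp => ?_
    rw [← Finset.HasAntidiagonal.mem_antidiagonal.1 hp, pow_add]
    ring
  set f : ℂ → ℂ := fun w => ∑' k : ℕ, b k * w ^ k with hf
  set g : ℂ → ℂ := fun w => ∑' k : ℕ, a k * w ^ k with hg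
  have hderiv : ∀ z ∈ Metric.ball (0 : ℂ) R,
      HasDerivAt (fun w => f w * Complex.exp (-g w)) 0 z := by
    intro z hz
    rw [mem_ball_zero_iff] at hz
    have hfz := (hasDerivAt_tsum_mul_pow hb hz).2
    have hgz := (hasDerivAt_tsum_mul_pow ha hz).2
    rw [hode z hz] at hfz
    refine (hfz.mul hgz.neg.cexp).congr_deriv ?_
    simp only [Pi.neg_apply]
    ring
  have hxmem : x ∈ Metric.ball (0 : ℂ) R := by simpa using hx
  have hconst := Metric.isOpen_ball.is_const_of_deriv_eq_zero
    (convex_ball (0 : ℂ) R).isPreconnected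
    (fun z hz => (hderiv z hz).differentiableAt.differentiableWithinAt)
    (fun z hz => (hderiv z hz).deriv) hxmem
    (Metric.mem_ball_self ((norm_nonneg x).trans_lt hx))
  have hzero : ∀ c : ℕ → ℂ, ∑' k : ℕ, c k * (0 : ℂ) ^ k = c 0 := fun c => by
    rw [tsum_eq_single 0 fun k hk => by simp [hk]]
    simp
  have hone : f x * Complex.exp (-g x) = 1 := by
    refine hconst.trans ?_
    simp [hf, hg, hzero, ha0, hb0]
  rwa [Complex.exp_neg, mul_inv_eq_one₀ (Complex.exp_ne_zero _)] at hone

theorem D_ne_zero {α : ℝ} (hα : Irrational α) {k : ℕ} (hk : k ≠ 0) : D α k ≠ 0 := by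
  intro h
  have hcos : Real.cos (2 * Real.pi * k * α) = 1 := by
    unfold D at h; linarith
  obtain ⟨n, hn⟩ := (Real.cos_eq_one_iff _).1 hcos
  have hpi : (2 * Real.pi) ≠ 0 := by positivity
  have hkn : (n : ℝ) = k * α := mul_right_cancel₀ hpi (by rw [hn]; ring)
  exact (hα.natCast_mul hk).ne_int n hkn.symm

theorem abs_D_le (α : ℝ) (k : ℕ) : |D α k| ≤ 4 := by
  unfold D
  rw [abs_le]
  constructor <;>
    linarith [Real.neg_one_le_cos (2 * Real.pi * k * α), Real.cos_le_one (2 * Real.pi * k * α)]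

theorem exp_pow_add_inv_pow (α : ℝ) (k : ℕ) :
    Complex.exp (2 * Real.pi * Complex.I * α) ^ k - 2
      + (Complex.exp (2 * Real.pi * Complex.I * α) ^ k)⁻¹ = -(D α k : ℂ) := by
  rw [← Complex.exp_nat_mul, ← Complex.exp_neg]
  unfold D
  push_cast
  rw [Complex.cos]
  have h₁ : (k : ℂ) * (2 * Real.pi * Complex.I * α) = 2 * Real.pi * k * α * Complex.I := by ring
  rw [h₁, neg_mul]
  ring


/-- if the power series `m(x) = Σ m_k x^k` (with `m_0 = 0`) has radius of
convergence `R > 0`, then for `|x| < R` the series `F(x) = Σ F_k x^k` converges, equals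
`exp(m(x))`, and `m` satisfies `m(λx) - 2m(x) + m(x/λ) = -x·exp(m(x))` where
`λ = exp(2πiα)`. -/
theorem stmt1 (α : ℝ) (hα : Irrational α)
    (l : ℂ) (hl : l = Complex.exp (2 * Real.pi * Complex.I * (α : ℂ)))
    (m F : ℕ → ℝ)
    (hm0 : m 0 = 0) (hF0 : F 0 = 1)
    (hm : ∀ k : ℕ, m (k + 1) = F k / D α (k + 1))
    (hF : ∀ k : ℕ, 1 ≤ k →
      (k : ℝ) * F k = ∑ j ∈ Finset.Icc 1 k, (j : ℝ) * m j * F (k - j))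
    (R : ℝ) (hR : 0 < R)
    (hconv : ∀ x : ℂ, ‖x‖ < R → Summable fun k : ℕ => (m k : ℂ) * x ^ k)
    (x : ℂ) (hx : ‖x‖ < R) :
    (Summable fun k : ℕ => (F k : ℂ) * x ^ k) ∧
    (∑' k : ℕ, (F k : ℂ) * x ^ k) = Complex.exp (∑' k : ℕ, (m k : ℂ) * x ^ k) ∧
    (∑' k : ℕ, (m k : ℂ) * (l * x) ^ k) - 2 * (∑' k : ℕ, (m k : ℂ) * x ^ k)
        + (∑' k : ℕ, (m k : ℂ) * (x / l) ^ k)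
      = -x * Complex.exp (∑' k : ℕ, (m k : ℂ) * x ^ k) := by
  have hFm : ∀ k, F k = D α (k + 1) * m (k + 1) := fun k => by
    rw [hm, mul_div_cancel₀ _ (D_ne_zero hα k.succ_ne_zero)]
  have hFsum : ∀ z : ℂ, ‖z‖ < R → Summable fun k : ℕ => (F k : ℂ) * z ^ k := by
    intro z hz
    rcases eq_or_ne z 0 with rfl | hz0
    · exact summable_of_ne_finset_zero (s := {0}) fun k hk => by
        simp [Finset.notMem_singleton.1 hk]
    · refine Summable.of_norm_bounded
        (((summable_nat_add_iff 1).2 (hconv z hz).norm).mul_left (4 / ‖z‖)) fun k => ?_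
      have hz' : ‖z‖ ≠ 0 := norm_ne_zero_iff.2 hz0
      calc ‖(F k : ℂ) * z ^ k‖ = |D α (k + 1)| * (|m (k + 1)| * ‖z‖ ^ k) := by
            rw [norm_mul, norm_pow, Complex.norm_real, Real.norm_eq_abs, hFm, abs_mul, mul_assoc]
        _ ≤ 4 * (|m (k + 1)| * ‖z‖ ^ k) := by gcongr; exact abs_D_le α (k + 1)
        _ = 4 / ‖z‖ * ‖(m (k + 1) : ℂ) * z ^ (k + 1)‖ := by
            rw [norm_mul, norm_pow, Complex.norm_real, Real.norm_eq_abs]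
            rw [pow_succ]
            field_simp
  have hrec : ∀ n : ℕ, ((n : ℂ) + 1) * (F (n + 1) : ℂ)
      = ∑ p ∈ Finset.HasAntidiagonal.antidiagonal n, ((p.1 : ℂ) + 1) * (m (p.1 + 1) : ℂ) * (F p.2 : ℂ) := by
    intro n
    have h := hF (n + 1) (Nat.le_add_left 1 n)
    rw [← Finset.Ico_add_one_right_eq_Icc, Finset.sum_Ico_eq_sum_range] at h
    rw [Finset.Nat.sum_antidiagonal_eq_sum_range_succ_mk]
    have h' := congrArg (fun t : ℝ => (t : ℂ)) h
    push_cast at h'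
    rw [h']
    refine Finset.sum_congr rfl fun i _ => ?_
    rw [Nat.add_comm 1 i, Nat.add_sub_add_right]
    ring
  have hexp := tsum_mul_pow_eq_exp hconv hFsum (by simp [hm0]) (by simp [hF0]) hrec hx
  refine ⟨hFsum x hx, hexp, ?_⟩
  have hl1 : ‖l‖ = 1 := by
    rw [hl, Complex.norm_exp]; simp
  have h₁ := hconv (l * x) (by rwa [norm_mul, hl1, one_mul])
  have h₂ := hconv x hx
  have h₃ := hconv (x / l) (by rwa [norm_div, hl1, div_one])
  have hterm : ∀ k : ℕ, (m k : ℂ) * (l * x) ^ k - 2 * ((m k : ℂ) * x ^ k)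
      + (m k : ℂ) * (x / l) ^ k = -(D α k : ℂ) * (m k : ℂ) * x ^ k := fun k => by
    rw [← exp_pow_add_inv_pow, ← hl, mul_pow, div_pow]
    ring
  have hsum := (h₁.sub (h₂.mul_left 2)).add h₃
  rw [← hexp, ← tsum_mul_left, ← h₁.tsum_sub (h₂.mul_left 2),
    ← (h₁.sub (h₂.mul_left 2)).tsum_add h₃, hsum.tsum_eq_zero_add, ← tsum_mul_left, hterm, hm0]
  simp only [Complex.ofReal_zero, mul_zero, zero_mul, zero_add]
  refine tsum_congr fun k => ?_
  rw [hterm, hFm]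
  push_cast
  ring
end

section
/- Let α be an irrational real number and let (m_k) be given by the Master recursion. Then the radius of convergence R of the power series Σ_{k≥1} m_k x^k satisfies R ≤ 4/e. -/
theorem D_le_four (α : ℝ) (k : ℕ) : D α k ≤ 4 := by
  unfold D
  linarith [Real.neg_one_le_cos (2 * Real.pi * k * α)]

theorem D_pos {α : ℝ} (hα : Irrational α) {k : ℕ} (hk : k ≠ 0) : 0 < D α k := by
  have hne : Real.cos (2 * Real.pi * k * α) ≠ 1 := by
    rw [Ne, Real.cos_eq_one_iff]
    rintro ⟨n, hn⟩
    have hkα : (k : ℝ) * α = n := by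
      have h2π : 2 * Real.pi ≠ 0 := by positivity
      apply mul_left_cancel₀ h2π
      linarith
    exact (hα.natCast_mul hk).ne_int n hkα
  have hlt := lt_of_le_of_ne (Real.cos_le_one (2 * Real.pi * k * α)) hne
  unfold D
  linarith

/-- A power series converging absolutely at `r` has a term-by-term derivative series converging
absolutely at every smaller nonnegative radius. -/
theorem summable_natCast_mul_pow_sub_one {a : ℕ → ℝ} (ha : ∀ k, 0 ≤ a k) {r s : ℝ} (hs : 0 < s)
    (hsr : s < r) (hr : Summable fun k => a k * r ^ k) :
    Summable fun k : ℕ => a k * (k * s ^ (k - 1)) := by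
  have hr0 : 0 < r := hs.trans hsr
  have hq : ‖s / r‖ < 1 := by
    rw [Real.norm_of_nonneg (by positivity), div_lt_one hr0]
    exact hsr
  have hlin : Summable fun k : ℕ => (k : ℝ) * (s / r) ^ k := by
    simpa using summable_pow_mul_geometric_of_norm_lt_one 1 hq
  have hterm : ∀ k : ℕ, 0 ≤ (k : ℝ) * (s / r) ^ k := fun k => by positivity
  refine Summable.of_nonneg_of_le (fun k => mul_nonneg (ha k) (by positivity)) (fun k => ?_)
    (hr.mul_left ((∑' k : ℕ, (k : ℝ) * (s / r) ^ k) / s))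
  have hk := hlin.le_tsum k fun j _ => hterm j
  have hpow : (k : ℝ) * s ^ (k - 1) = (k * (s / r) ^ k) / s * r ^ k := by
    rcases k with _ | k
    · simp
    · rw [div_pow, Nat.add_sub_cancel]
      field_simp
      rw [pow_succ]
  calc a k * (k * s ^ (k - 1)) = (k * (s / r) ^ k) / s * (a k * r ^ k) := by rw [hpow]; ring
    _ ≤ _ := by
      have := mul_nonneg (ha k) (pow_nonneg hr0.le k)
      gcongr

theorem summable_mul_pow_of_le {a : ℕ → ℝ} (ha : ∀ k, 0 ≤ a k) {r x : ℝ} (hx : 0 ≤ x)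
    (hxr : x ≤ r) (hr : Summable fun k => a k * r ^ k) : Summable fun k => a k * x ^ k :=
  Summable.of_nonneg_of_le (fun k => mul_nonneg (ha k) (pow_nonneg hx k))
    (fun k => mul_le_mul_of_nonneg_left (pow_le_pow_left₀ hx hxr k) (ha k)) hr

theorem hasDerivAt_tsum_mul_pow_s3 {a : ℕ → ℝ} (ha : ∀ k, 0 ≤ a k) {r x : ℝ} (hxr : |x| < r)
    (hr : Summable fun k => a k * r ^ k) :
    HasDerivAt (fun y => ∑' k, a k * y ^ k) (∑' k : ℕ, a k * (k * x ^ (k - 1))) x := by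
  obtain ⟨s, hxs, hsr⟩ := exists_between hxr
  have hs : 0 < s := (abs_nonneg x).trans_lt hxs
  refine hasDerivAt_tsum_of_isPreconnected (t := Set.Ioo (-s) s) (y₀ := 0)
    (summable_natCast_mul_pow_sub_one ha hs hsr hr) isOpen_Ioo isPreconnected_Ioo
    (fun k y _ => (hasDerivAt_pow k y).const_mul (a k)) (fun k y hy => ?_)
    ⟨by linarith, hs⟩ (summable_mul_pow_of_le ha le_rfl (hs.trans hsr).le hr) (abs_lt.1 hxs)
  have hy' : |y| ≤ s := (abs_lt.2 hy).le
  rw [norm_mul, norm_mul, norm_pow, Real.norm_of_nonneg (ha k), Real.norm_natCast, Real.norm_eq_abs]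
  have := ha k
  gcongr

/-- If nonnegative coefficients satisfy `k F_k = ∑ j m_j F_{k-j}`, then the generating function
of `F` has as logarithmic derivative the derivative of the generating function of `m`. -/
theorem tsum_deriv_eq_mul {m F : ℕ → ℝ} (hm : ∀ k, 0 ≤ m k) (hFn : ∀ k, 0 ≤ F k)
    (hF : ∀ k : ℕ, 1 ≤ k →
      (k : ℝ) * F k = ∑ j ∈ Finset.Icc 1 k, (j : ℝ) * m j * F (k - j))
    {r x : ℝ} (hx : 0 < x) (hxr : x < r) (hmr : Summable fun k => m k * r ^ k)
    (hFr : Summable fun k => F k * r ^ k) :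
    ∑' k : ℕ, F k * (k * x ^ (k - 1)) =
      (∑' k : ℕ, m k * (k * x ^ (k - 1))) * ∑' k, F k * x ^ k := by
  have hmul : ∀ k : ℕ, (k : ℝ) * x ^ (k - 1) * x = k * x ^ k := by
    rintro (_ | k)
    · simp
    · rw [Nat.add_sub_cancel, pow_succ]
      ring
  have hm' := summable_natCast_mul_pow_sub_one hm hx hxr hmr
  have hF' := summable_mul_pow_of_le hFn hx.le hxr.le hFr
  rw [tsum_mul_tsum_eq_tsum_sum_antidiagonal_of_summable_norm hm'.norm hF'.norm]
  refine tsum_congr fun k => mul_right_cancel₀ hx.ne' ?_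
  rw [mul_assoc, hmul, Finset.sum_mul, Finset.Nat.sum_antidiagonal_eq_sum_range_succ_mk,
    Finset.sum_range_succ']
  rcases Nat.eq_zero_or_pos k with rfl | hk
  · simp
  have hIcc : ∑ j ∈ Finset.Icc 1 k, (j : ℝ) * m j * F (k - j) =
      ∑ j ∈ Finset.range k, ((j + 1 : ℕ) : ℝ) * m (j + 1) * F (k - (j + 1)) := by
    rw [Finset.range_eq_Ico, Finset.sum_Ico_add' (fun j : ℕ => (j : ℝ) * m j * F (k - j)) 0 k 1]
    rfl
  calc F k * (k * x ^ k) = (k * F k) * x ^ k := by ring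
    _ = _ := by
      rw [hF k hk, hIcc, Finset.sum_mul]
      simp only [Nat.cast_zero, zero_mul, mul_zero, add_zero]
      refine Finset.sum_congr rfl fun j hj => ?_
      have hjk : j + 1 ≤ k := Finset.mem_range.1 hj
      have hpow : x ^ k = x ^ (j + 1) * x ^ (k - (j + 1)) := by
        rw [← pow_add, Nat.add_sub_cancel' hjk]
      rw [hpow, Nat.add_sub_cancel, pow_succ]
      ring

theorem exp_tsum_le_tsum {m F : ℕ → ℝ} (hm : ∀ k, 0 ≤ m k) (hFn : ∀ k, 0 ≤ F k)
    (hm0 : m 0 = 0) (hF0 : F 0 = 1)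
    (hF : ∀ k : ℕ, 1 ≤ k →
      (k : ℝ) * F k = ∑ j ∈ Finset.Icc 1 k, (j : ℝ) * m j * F (k - j))
    {r x : ℝ} (hx : 0 ≤ x) (hxr : x < r) (hmr : Summable fun k => m k * r ^ k)
    (hFr : Summable fun k => F k * r ^ k) :
    Real.exp (∑' k, m k * x ^ k) ≤ ∑' k, F k * x ^ k := by
  have hderiv : ∀ y ∈ Set.Icc 0 x, HasDerivAt
      (fun y => (∑' k, F k * y ^ k) * Real.exp (-∑' k, m k * y ^ k)) _ y := fun y hy =>
    have hyr : |y| < r := by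
      rw [abs_of_nonneg hy.1]
      exact hy.2.trans_lt hxr
    (hasDerivAt_tsum_mul_pow_s3 hFn hyr hFr).mul (hasDerivAt_tsum_mul_pow_s3 hm hyr hmr).neg.exp
  have hmono : MonotoneOn (fun y => (∑' k, F k * y ^ k) * Real.exp (-∑' k, m k * y ^ k))
      (Set.Icc 0 x) := by
    refine monotoneOn_of_deriv_nonneg (convex_Icc 0 x)
      (fun y hy => (hderiv y hy).continuousAt.continuousWithinAt)
      (fun y hy => (hderiv y (interior_subset hy)).differentiableAt.differentiableWithinAt)
      fun y hy => ?_
    rw [(hderiv y (interior_subset hy)).deriv]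
    rw [interior_Icc] at hy
    rw [tsum_deriv_eq_mul hm hFn hF hy.1 (hy.2.trans hxr) hmr hFr]
    apply le_of_eq
    simp only [Pi.neg_apply]
    ring
  have hzero : ∀ a : ℕ → ℝ, ∑' k, a k * (0 : ℝ) ^ k = a 0 := fun a => by
    rw [tsum_eq_single 0 fun k hk => by simp [hk]]
    simp
  have hle := hmono ⟨le_rfl, hx⟩ ⟨hx, le_rfl⟩ hx
  simp only [hzero, hm0, hF0, neg_zero, Real.exp_zero, mul_one, Real.exp_neg] at hle
  rwa [← div_eq_mul_inv, one_le_div (Real.exp_pos _)] at hle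

/-- the radius of convergence of `Σ m_k x^k` is at most `4/e`, expressed
as: any `R` such that the series converges on `[0, R)` satisfies `R ≤ 4/e`. -/
theorem stmt3 (α : ℝ) (hα : Irrational α) (m F : ℕ → ℝ)
    (hm0 : m 0 = 0) (hF0 : F 0 = 1)
    (hm : ∀ k : ℕ, m (k + 1) = F k / D α (k + 1))
    (hF : ∀ k : ℕ, 1 ≤ k →
      (k : ℝ) * F k = ∑ j ∈ Finset.Icc 1 k, (j : ℝ) * m j * F (k - j))
    (R : ℝ)
    (hconv : ∀ r : ℝ, 0 ≤ r → r < R → Summable fun k : ℕ => m k * r ^ k) :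
    R ≤ 4 / Real.exp 1 := by
  have hD : ∀ k : ℕ, 0 < D α (k + 1) := fun k => D_pos hα k.succ_ne_zero
  have hFn : ∀ k, 0 ≤ F k := by
    intro k
    induction k using Nat.strong_induction_on with
    | _ k ih =>
      rcases Nat.eq_zero_or_pos k with rfl | hk
      · simp [hF0]
      refine nonneg_of_mul_nonneg_right (a := (k : ℝ)) ?_ (by exact_mod_cast hk)
      rw [hF k hk]
      refine Finset.sum_nonneg fun j hj => ?_
      obtain ⟨hj1, hjk⟩ := Finset.mem_Icc.1 hj
      obtain ⟨i, rfl⟩ := Nat.exists_eq_add_of_le' hj1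
      rw [hm]
      exact mul_nonneg (mul_nonneg (Nat.cast_nonneg _) (div_nonneg (ih i (by omega)) (hD i).le))
        (ih _ (by omega))
  have hmn : ∀ k, 0 ≤ m k := by
    rintro (_ | k)
    · exact hm0.ge
    · rw [hm]
      exact div_nonneg (hFn k) (hD k).le
  have hFm : ∀ k, F k ≤ 4 * m (k + 1) := fun k => by
    have hmk : F k = m (k + 1) * D α (k + 1) := by rw [hm, div_mul_cancel₀ _ (hD k).ne']
    rw [hmk, mul_comm]
    exact mul_le_mul_of_nonneg_right (D_le_four α _) (hmn _)
  by_contra! hR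
  obtain ⟨s, hs, hsR⟩ := exists_between hR
  obtain ⟨r, hr, hrs⟩ := exists_between hs
  have hr0 : 0 < r := lt_trans (by positivity) hr
  have hs0 : 0 < s := hr0.trans hrs
  have hms := hconv s hs0.le hsR
  have hterm : ∀ {t : ℝ}, 0 < t → ∀ k, F k * t ^ k ≤ 4 / t * (m (k + 1) * t ^ (k + 1)) := by
    intro t ht k
    calc F k * t ^ k ≤ 4 * m (k + 1) * t ^ k := by gcongr; exact hFm k
      _ = _ := by rw [pow_succ]; field_simp
  have hFs : Summable fun k => F k * s ^ k :=
    Summable.of_nonneg_of_le (fun k => mul_nonneg (hFn k) (pow_nonneg hs0.le k)) (hterm hs0)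
      (((summable_nat_add_iff 1).2 hms).mul_left (4 / s))
  have hmr := summable_mul_pow_of_le hmn hr0.le hrs.le hms
  have hFr := summable_mul_pow_of_le hFn hr0.le hrs.le hFs
  have hexp := exp_tsum_le_tsum hmn hFn hm0 hF0 hF hr0.le hrs hms hFs
  have hshift : ∑' k, m (k + 1) * r ^ (k + 1) = ∑' k, m k * r ^ k := by
    rw [hmr.tsum_eq_zero_add, hm0, zero_mul, zero_add]
  have hFM : ∑' k, F k * r ^ k ≤ 4 / r * ∑' k, m k * r ^ k := by
    rw [← hshift, ← tsum_mul_left]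
    exact hFr.tsum_le_tsum (hterm hr0) (((summable_nat_add_iff 1).2 hmr).mul_left (4 / r))
  set M := ∑' k, m k * r ^ k
  have hMexp : Real.exp M ≤ 4 / r * M := hexp.trans hFM
  have hMpos : 0 < M := pos_of_mul_pos_right ((Real.exp_pos M).trans_le hMexp) (by positivity)
  have hlow : Real.exp 1 * M ≤ Real.exp M := by
    have hsub := Real.add_one_le_exp (M - 1)
    calc Real.exp 1 * M ≤ Real.exp 1 * Real.exp (M - 1) := by gcongr; linarith
      _ = Real.exp M := by rw [← Real.exp_add]; congr 1; ring
  have hle : Real.exp 1 ≤ 4 / r := le_of_mul_le_mul_right (hlow.trans hMexp) hMpos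
  rw [div_lt_iff₀ (Real.exp_pos 1)] at hr
  rw [le_div_iff₀ hr0] at hle
  linarith
end

section
/- Let α be a badly approximable irrational real number. Then the power series Σ_{k≥0} x^k / (D(1)·D(2)···D(k)) (the solution of the linearized Master equation with m(0) = 1) has radius of convergence exactly equal to 1. -/
open Finset Filter Topology

/-- The coefficients `1 / ((1 - q)(1 - q²)⋯(1 - qⁿ))` of the `q`-exponential series. -/
noncomputable def qExpCoeff (q : ℂ) (n : ℕ) : ℂ := ∏ j ∈ Icc 1 n, (1 - q ^ j)⁻¹

theorem qExpCoeff_zero (q : ℂ) : qExpCoeff q 0 = 1 := by simp [qExpCoeff]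

theorem one_sub_pow_mul_qExpCoeff_succ {q : ℂ} (hq : ∀ k : ℕ, 1 - q ^ (k + 1) ≠ 0) (n : ℕ) :
    (1 - q ^ (n + 1)) * qExpCoeff q (n + 1) = qExpCoeff q n := by
  rw [qExpCoeff, prod_Icc_succ_top (by omega), ← qExpCoeff, mul_comm, mul_assoc,
    inv_mul_cancel₀ (hq n), mul_one]

/-- The coefficient form of `df/dx = f · ∑ xᵏ / (1 - qᵏ⁺¹)`, where `f` is the `q`-exponential. -/
theorem sum_qExpCoeff_mul_inv {q : ℂ} (hq : ∀ k : ℕ, 1 - q ^ (k + 1) ≠ 0) (n : ℕ) :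
    ∑ k ∈ range n, qExpCoeff q (n - 1 - k) * (1 - q ^ (k + 1))⁻¹ = n * qExpCoeff q n := by
  induction n with
  | zero => simp
  | succ n ih =>
    apply mul_left_cancel₀ (hq n)
    have hterm : ∀ k ∈ range n,
        (1 - q ^ (n + 1)) * (qExpCoeff q (n - k) * (1 - q ^ (k + 1))⁻¹) =
          (qExpCoeff q (n - k) - qExpCoeff q (n - (k + 1))) +
            qExpCoeff q (n - 1 - k) * (1 - q ^ (k + 1))⁻¹ := by
      intro k hk
      obtain ⟨m, rfl⟩ := Nat.exists_eq_add_of_lt (mem_range.mp hk)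
      have h1 : k + m + 1 - k = m + 1 := by omega
      have h2 : k + m + 1 - (k + 1) = m := by omega
      have h3 : k + m + 1 - 1 - k = m := by omega
      rw [h1, h2, h3, ← one_sub_pow_mul_qExpCoeff_succ hq m]
      field_simp [hq k]
      ring
    rw [mul_sum, sum_range_succ, Nat.add_sub_cancel, sum_congr rfl hterm, sum_add_distrib, ih,
      sum_range_sub' (fun k => qExpCoeff q (n - k))]
    have h := one_sub_pow_mul_qExpCoeff_succ hq n
    have h' := hq n
    simp only [Nat.sub_zero, Nat.sub_self]
    push_cast
    field_simp
    linear_combination (-(n : ℂ) - 1) * h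

/-- A nonnegative sequence with `n Aₙ ≤ C ∑_{k<n} (k+1) A_{n-1-k}` grows subexponentially. -/
theorem exists_le_mul_pow_of_convolution_le {A : ℕ → ℝ} (hA : ∀ n, 0 ≤ A n) {C : ℝ} (hC : 0 ≤ C)
    (h : ∀ n : ℕ, n * A n ≤ ∑ k ∈ range n, A (n - 1 - k) * (C * ((k : ℝ) + 1)))
    {R : ℝ} (hR : 1 < R) : ∃ M, ∀ n, A n ≤ M * R ^ n := by
  have hR0 : 0 < R := by linarith
  have hs : Summable fun k : ℕ => ((k : ℝ) + 1) * R⁻¹ ^ (k + 1) := by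
    have := summable_pow_mul_geometric_of_norm_lt_one (R := ℝ) 1 (r := R⁻¹)
      (by rw [Real.norm_of_nonneg (by positivity)]; exact inv_lt_one_of_one_lt₀ hR)
    simpa using (summable_nat_add_iff 1).mpr this
  set T := ∑' k : ℕ, ((k : ℝ) + 1) * R⁻¹ ^ (k + 1) with hT
  obtain ⟨N, hN⟩ := exists_nat_ge (C * T)
  set M := ∑ j ∈ range (N + 1), A j with hM
  have hM0 : 0 ≤ M := sum_nonneg fun j _ => hA j
  refine ⟨M, fun n => ?_⟩
  induction n using Nat.strong_induction_on with
  | _ n ih =>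
    rcases Nat.lt_or_ge n (N + 1) with hn | hn
    · calc A n ≤ M := single_le_sum (fun j _ => hA j) (mem_range.mpr hn)
        _ ≤ M * R ^ n := le_mul_of_one_le_right hM0 (one_le_pow₀ hR.le)
    · have hn0 : (0 : ℝ) < n := by exact_mod_cast (by omega : 0 < n)
      have hNn : (N : ℝ) ≤ n := by exact_mod_cast (by omega : N ≤ n)
      refine le_of_mul_le_mul_left ?_ hn0
      calc (n : ℝ) * A n ≤ ∑ k ∈ range n, A (n - 1 - k) * (C * ((k : ℝ) + 1)) := h n
        _ ≤ ∑ k ∈ range n, M * R ^ n * C * (((k : ℝ) + 1) * R⁻¹ ^ (k + 1)) := by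
          refine sum_le_sum fun k hk => ?_
          have hk := mem_range.mp hk
          have hpow : R ^ n * R⁻¹ ^ (k + 1) = R ^ (n - 1 - k) := by
            have : n = (n - 1 - k) + (k + 1) := by omega
            conv_lhs => rw [this]
            rw [pow_add, inv_pow, mul_assoc, mul_inv_cancel₀ (by positivity), mul_one]
          calc A (n - 1 - k) * (C * ((k : ℝ) + 1))
              ≤ M * R ^ (n - 1 - k) * (C * ((k : ℝ) + 1)) :=
                mul_le_mul_of_nonneg_right (ih _ (by omega)) (by positivity)
            _ = M * R ^ n * C * (((k : ℝ) + 1) * R⁻¹ ^ (k + 1)) := by rw [← hpow]; ring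
        _ = M * R ^ n * C * ∑ k ∈ range n, ((k : ℝ) + 1) * R⁻¹ ^ (k + 1) := by rw [mul_sum]
        _ ≤ M * R ^ n * C * T :=
          mul_le_mul_of_nonneg_left (hs.sum_le_tsum _ fun k _ => by positivity) (by positivity)
        _ = C * T * (M * R ^ n) := by ring
        _ ≤ n * (M * R ^ n) := mul_le_mul_of_nonneg_right (hN.trans hNn) (by positivity)

theorem exists_norm_qExpCoeff_le {q : ℂ} (hq : ∀ k : ℕ, 1 - q ^ (k + 1) ≠ 0) {C : ℝ} (hC : 0 ≤ C)
    (hb : ∀ k : ℕ, ‖(1 - q ^ (k + 1))⁻¹‖ ≤ C * ((k : ℝ) + 1)) {R : ℝ} (hR : 1 < R) :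
    ∃ M, ∀ n, ‖qExpCoeff q n‖ ≤ M * R ^ n := by
  refine exists_le_mul_pow_of_convolution_le (fun n => norm_nonneg _) hC (fun n => ?_) hR
  calc (n : ℝ) * ‖qExpCoeff q n‖ = ‖(n : ℂ) * qExpCoeff q n‖ := by simp
    _ ≤ ∑ k ∈ range n, ‖qExpCoeff q (n - 1 - k) * (1 - q ^ (k + 1))⁻¹‖ := by
      rw [← sum_qExpCoeff_mul_inv hq]; exact norm_sum_le _ _
    _ ≤ _ := sum_le_sum fun k _ => by
      rw [norm_mul]; exact mul_le_mul_of_nonneg_left (hb k) (norm_nonneg _)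

/-- If the `q`-exponential series converges absolutely on the unit circle, it vanishes at every
positive power of `q`. -/
theorem tsum_qExpCoeff_mul_pow_eq_zero {q : ℂ} (hq1 : ‖q‖ = 1)
    (hq : ∀ k : ℕ, 1 - q ^ (k + 1) ≠ 0) (hs : Summable fun k => ‖qExpCoeff q k‖) (n : ℕ) :
    ∑' k, qExpCoeff q k * (q ^ (n + 1)) ^ k = 0 := by
  have hsum : ∀ n : ℕ, Summable fun k => qExpCoeff q k * (q ^ n) ^ k := fun n =>
    Summable.of_norm (by simpa [hq1] using hs)
  have hrec : ∀ n : ℕ, ∑' k, qExpCoeff q k * (q ^ (n + 1)) ^ k =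
      (1 - q ^ n) * ∑' k, qExpCoeff q k * (q ^ n) ^ k := by
    intro n
    have h : ∑' k, (qExpCoeff q k * (q ^ n) ^ k - qExpCoeff q k * (q ^ (n + 1)) ^ k) =
        q ^ n * ∑' k, qExpCoeff q k * (q ^ n) ^ k := by
      rw [((hsum n).sub (hsum (n + 1))).tsum_eq_zero_add, ← tsum_mul_left]
      simp only [pow_zero, sub_self, zero_add]
      refine tsum_congr fun k => ?_
      rw [← one_sub_pow_mul_qExpCoeff_succ hq k]
      ring
    rw [(hsum n).tsum_sub (hsum (n + 1))] at h
    linear_combination -h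
  induction n with
  | zero => rw [hrec]; simp
  | succ n ih => rw [hrec, ih, mul_zero]

/-- Cesàro means of the powers of a point `w ≠ 1` of the unit circle tend to `0`. -/
theorem tendsto_cesaro_pow {w : ℂ} (hw : ‖w‖ = 1) (hw1 : w ≠ 1) :
    Tendsto (fun N : ℕ => (N : ℂ)⁻¹ * ∑ n ∈ range N, w ^ (n + 1)) atTop (𝓝 0) := by
  have hlim : Tendsto (fun N : ℕ => ‖(N : ℂ)⁻¹‖ * (2 / ‖w - 1‖)) atTop (𝓝 0) := by
    simpa using (tendsto_inv_atTop_nhds_zero_nat (𝕜 := ℝ)).mul_const (2 / ‖w - 1‖)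
  refine squeeze_zero_norm (fun N => ?_) hlim
  rw [norm_mul]
  refine mul_le_mul_of_nonneg_left ?_ (norm_nonneg _)
  simp_rw [pow_succ, ← sum_mul]
  rw [geom_sum_eq hw1, norm_mul, hw, mul_one, norm_div]
  gcongr
  calc ‖w ^ N - 1‖ ≤ ‖w ^ N‖ + ‖(1 : ℂ)‖ := norm_sub_le _ _
    _ = 2 := by rw [norm_pow, hw]; norm_num

theorem not_summable_norm_qExpCoeff {q : ℂ} (hq1 : ‖q‖ = 1)
    (hq : ∀ k : ℕ, 1 - q ^ (k + 1) ≠ 0) : ¬ Summable fun k => ‖qExpCoeff q k‖ := by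
  intro hs
  let mean : ℕ → ℕ → ℂ := fun N k => (N : ℂ)⁻¹ * ∑ n ∈ range N, (q ^ k) ^ (n + 1)
  have hlim : Tendsto (fun N => ∑' k, qExpCoeff q k * mean N k) atTop
      (𝓝 (∑' k, qExpCoeff q k * if k = 0 then 1 else 0)) := by
    refine tendsto_tsum_of_dominated_convergence hs (fun k => ?_) (.of_forall fun N k => ?_)
    · refine Tendsto.const_mul _ ?_
      rcases k with _ | k
      · refine tendsto_const_nhds.congr' ?_
        filter_upwards [eventually_gt_atTop 0] with N hN
        have : (N : ℂ) ≠ 0 := by exact_mod_cast hN.ne'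
        simp [mean, this]
      · simpa [mean] using tendsto_cesaro_pow (w := q ^ (k + 1)) (by simp [hq1])
          fun h => hq k (by rw [h, sub_self])
    · rw [norm_mul]
      refine mul_le_of_le_one_right (norm_nonneg _) ?_
      have hle : ‖∑ n ∈ range N, (q ^ k) ^ (n + 1)‖ ≤ N :=
        (norm_sum_le _ _).trans (by simp [hq1])
      rw [norm_mul, norm_inv, Complex.norm_natCast, inv_mul_eq_div]
      exact div_le_one_of_le₀ hle (Nat.cast_nonneg _)
  have hzero : ∀ N, ∑' k, qExpCoeff q k * mean N k = 0 := by
    intro N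
    have hsum : ∀ n : ℕ, Summable fun k => qExpCoeff q k * (q ^ (n + 1)) ^ k := fun n =>
      Summable.of_norm (by simpa [hq1] using hs)
    calc ∑' k, qExpCoeff q k * mean N k
        = ∑' k, (N : ℂ)⁻¹ * ∑ n ∈ range N, qExpCoeff q k * (q ^ (n + 1)) ^ k := by
          refine tsum_congr fun k => ?_
          simp only [mean]
          rw [← mul_sum, mul_left_comm]
          simp_rw [← pow_mul, mul_comm]
      _ = 0 := by
          rw [tsum_mul_left, Summable.tsum_finsetSum fun n _ => hsum n]
          simp [tsum_qExpCoeff_mul_pow_eq_zero hq1 hq hs]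
  simp only [hzero, mul_ite, mul_one, mul_zero, tsum_ite_eq, qExpCoeff_zero] at hlim
  exact zero_ne_one (tendsto_nhds_unique tendsto_const_nhds hlim)

theorem D_eq_four_mul_sin_sq (α : ℝ) (k : ℕ) : D α k = 4 * Real.sin (Real.pi * (k * α)) ^ 2 := by
  rw [D, show 2 * Real.pi * k * α = 2 * (Real.pi * (k * α)) by ring, Real.cos_two_mul,
    Real.sin_sq]
  ring

theorem norm_one_sub_exp_pow_sq (α : ℝ) (k : ℕ) :
    ‖1 - Complex.exp ((2 * Real.pi * α : ℝ) * Complex.I) ^ k‖ ^ 2 = D α k := by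
  rw [← Complex.exp_nat_mul, ← mul_assoc, ← Complex.ofReal_natCast, ← Complex.ofReal_mul,
    Complex.sq_norm, Complex.normSq_apply, D]
  simp only [Complex.sub_re, Complex.sub_im, Complex.one_re, Complex.one_im,
    Complex.exp_ofReal_mul_I_re, Complex.exp_ofReal_mul_I_im]
  rw [show (k : ℝ) * (2 * Real.pi * α) = 2 * Real.pi * k * α by ring]
  linear_combination Real.sin_sq_add_cos_sq (2 * Real.pi * k * α)

theorem sq_le_D {α c : ℝ} (hc : 0 < c)
    (hbad : ∀ (p : ℤ) (q : ℕ), 0 < q → c / (q : ℝ) ^ 2 ≤ |α - p / q|) {k : ℕ} (hk : 0 < k) :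
    (4 * c / k) ^ 2 ≤ D α k := by
  have hk' : (0 : ℝ) < k := by exact_mod_cast hk
  set p := round (k * α)
  set t := (k : ℝ) * α - p with ht
  have hlow : c / k ≤ |t| := by
    have h := mul_le_mul_of_nonneg_left (hbad p k hk) hk'.le
    rw [← abs_of_pos hk', ← abs_mul, abs_of_pos hk'] at h
    have hleft : (k : ℝ) * (c / k ^ 2) = c / k := by field_simp
    have hright : (k : ℝ) * (α - p / k) = t := by rw [ht]; field_simp
    rwa [hleft, hright] at h
  have hsin : Real.sin (Real.pi * (k * α)) ^ 2 = Real.sin (Real.pi * t) ^ 2 := by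
    rw [ht, mul_sub, mul_comm Real.pi (p : ℝ), Real.sin_sub_int_mul_pi, mul_pow]
    rw [← sq_abs ((-1 : ℝ) ^ p), abs_neg_one_zpow, one_pow, one_mul]
  have hhalf : |Real.pi * t| ≤ Real.pi / 2 := by
    rw [abs_mul, abs_of_pos Real.pi_pos]
    nlinarith [abs_sub_round ((k : ℝ) * α), Real.pi_pos]
  have hjordan := Real.mul_abs_le_abs_sin hhalf
  rw [abs_mul, abs_of_pos Real.pi_pos, ← mul_assoc, div_mul_cancel₀ _ Real.pi_ne_zero] at hjordan
  rw [D_eq_four_mul_sin_sq, hsin, ← sq_abs (Real.sin _)]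
  calc (4 * c / k) ^ 2 = 4 * (2 * (c / k)) ^ 2 := by ring
    _ ≤ _ := by gcongr; linarith

/-- for a badly approximable irrational `α`, the power series
`Σ_{k≥0} x^k/(D(1)⋯D(k))` has radius of convergence exactly `1`: it converges for
`‖x‖ < 1` and diverges for real `r > 1`. -/
theorem stmt7 (α : ℝ) (hirr : Irrational α)
    (hbad : ∃ c > (0 : ℝ), ∀ (p : ℤ) (q : ℕ), 0 < q → c / (q : ℝ) ^ 2 ≤ |α - p / q|) :
    (∀ x : ℂ, ‖x‖ < 1 →
      Summable fun k : ℕ => x ^ k / ∏ j ∈ Finset.Icc 1 k, (D α j : ℂ)) ∧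
    (∀ r : ℝ, 1 < r →
      ¬ Summable fun k : ℕ => r ^ k / ∏ j ∈ Finset.Icc 1 k, D α j) := by
  obtain ⟨c, hc, hbad⟩ := hbad
  set q := Complex.exp ((2 * Real.pi * α : ℝ) * Complex.I) with hqdef
  have hq1 : ‖q‖ = 1 := Complex.norm_exp_ofReal_mul_I _
  have hlow : ∀ k : ℕ, 4 * c / ((k : ℝ) + 1) ≤ ‖1 - q ^ (k + 1)‖ := fun k => by
    have h := sq_le_D hc hbad k.succ_pos
    rw [← norm_one_sub_exp_pow_sq, ← hqdef] at h
    simpa using le_of_sq_le_sq h (norm_nonneg _)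
  have hq : ∀ k : ℕ, 1 - q ^ (k + 1) ≠ 0 := fun k =>
    norm_pos_iff.mp (lt_of_lt_of_le (by positivity) (hlow k))
  have hcoeff : ∀ k, (∏ j ∈ Icc 1 k, D α j)⁻¹ = ‖qExpCoeff q k‖ ^ 2 := fun k => by
    simp only [qExpCoeff, norm_prod, ← prod_pow, norm_inv, inv_pow, hqdef,
      norm_one_sub_exp_pow_sq, prod_inv_distrib]
  refine ⟨fun x hx => ?_, fun r hr hsum => ?_⟩
  · obtain ⟨s, hxs, hs1⟩ := exists_between hx
    have hs0 : 0 < s := (norm_nonneg x).trans_lt hxs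
    have hR : 1 < √s⁻¹ := Real.lt_sqrt_of_sq_lt (by simpa using (one_lt_inv₀ hs0).mpr hs1)
    obtain ⟨M, hM⟩ := exists_norm_qExpCoeff_le hq (C := (4 * c)⁻¹) (by positivity)
      (fun k => by
        rw [norm_inv]
        refine (inv_anti₀ (by positivity) (hlow k)).trans_eq ?_
        field_simp) hR
    have hgeo : Summable fun k : ℕ => M ^ 2 * (‖x‖ / s) ^ k :=
      (summable_geometric_of_lt_one (by positivity) ((div_lt_one hs0).mpr hxs)).mul_left _
    refine Summable.of_norm_bounded hgeo fun k => ?_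
    calc ‖x ^ k / ∏ j ∈ Icc 1 k, (D α j : ℂ)‖ = ‖x‖ ^ k * ‖qExpCoeff q k‖ ^ 2 := by
          rw [← Complex.ofReal_prod, div_eq_mul_inv, ← Complex.ofReal_inv, hcoeff]
          simp
      _ ≤ ‖x‖ ^ k * (M * √s⁻¹ ^ k) ^ 2 := by gcongr; exact hM k
      _ = M ^ 2 * (‖x‖ / s) ^ k := by
          rw [mul_pow, ← pow_mul, mul_comm k, pow_mul, Real.sq_sqrt (by positivity), div_eq_mul_inv,
            mul_pow]
          ring
  · have hr0 : 0 < r := by linarith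
    have hgeo : Summable fun k : ℕ => r⁻¹ ^ k :=
      summable_geometric_of_lt_one (by positivity) (inv_lt_one_of_one_lt₀ hr)
    refine not_summable_norm_qExpCoeff hq1 hq
      (Summable.of_nonneg_of_le (fun k => norm_nonneg _) (fun k => ?_) (hsum.add hgeo))
    rw [div_eq_mul_inv, hcoeff, inv_pow]
    have hpos : 0 < r ^ k := by positivity
    have hmul : r ^ k * (r ^ k)⁻¹ = 1 := mul_inv_cancel₀ hpos.ne'
    set u := ‖qExpCoeff q k‖
    have hamgm : 0 ≤ (r ^ k)⁻¹ * (r ^ k * u - 1) ^ 2 := by positivity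
    have hu : 0 ≤ u := norm_nonneg _
    have hexp : (r ^ k)⁻¹ * (r ^ k * u - 1) ^ 2 = r ^ k * u ^ 2 - 2 * u + (r ^ k)⁻¹ := by
      linear_combination (r ^ k * u ^ 2 - 2 * u) * hmul
    linarith
end

section
/- Let α be a badly approximable irrational real number. Then the Birkhoff averages of log D along the orbit of 0 under the rotation by α tend to zero: lim_{n→∞} (1/n)·Σ_{j=1}^{n} log(2 − 2cos(2πjα)) = 0. -/
open Filter

/-- The averages of the powers of a unimodular number other than `1` tend to zero. -/
lemma tendsto_average_pow_of_norm_eq_one {z : ℂ} (hz : ‖z‖ = 1) (hz1 : z ≠ 1) :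
    Tendsto (fun n : ℕ => (1 / n : ℂ) * ∑ j ∈ Finset.Icc 1 n, z ^ j) atTop (nhds 0) := by
  have hpos : 0 < ‖z - 1‖ := norm_pos_iff.2 (sub_ne_zero.2 hz1)
  have hlim : Tendsto (fun n : ℕ => (2 / ‖z - 1‖) * (1 / (n : ℝ))) atTop (nhds 0) := by
    simpa using tendsto_one_div_atTop_nhds_zero_nat.const_mul (2 / ‖z - 1‖)
  refine squeeze_zero_norm (fun n => ?_) hlim
  have hsum : ∑ j ∈ Finset.Icc 1 n, z ^ j = z * ((z ^ n - 1) / (z - 1)) := by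
    rw [← geom_sum_eq hz1, Finset.mul_sum, Finset.range_eq_Ico,
      ← Finset.Ico_add_one_right_eq_Icc, Finset.sum_Ico_eq_sum_range,
      Finset.range_eq_Ico]
    exact Finset.sum_congr (by simp) fun i _ => by ring
  have hnum : ‖z ^ n - 1‖ ≤ 2 := by
    refine (norm_sub_le _ _).trans ?_
    rw [norm_pow, hz]
    norm_num
  rw [hsum, norm_mul, norm_mul, hz, norm_div, norm_div, one_mul, norm_one, mul_comm,
    Complex.norm_natCast]
  gcongr

/-- The averages of `log (1 - r w ^ j)` tend to zero when `w` is unimodular and not a root of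
unity, and `0 ≤ r < 1`. -/
lemma tendsto_average_log_one_sub_mul_pow {w : ℂ} (hw : ‖w‖ = 1)
    (hroot : ∀ k : ℕ, 0 < k → w ^ k ≠ 1) {r : ℝ} (hr0 : 0 ≤ r) (hr1 : r < 1) :
    Tendsto (fun n : ℕ => (1 / n : ℂ) * ∑ j ∈ Finset.Icc 1 n, Complex.log (1 - r * w ^ j))
      atTop (nhds 0) := by
  have hseries : ∀ j : ℕ, HasSum (fun k : ℕ => (r * w ^ j : ℂ) ^ k / k)
      (-Complex.log (1 - r * w ^ j)) := fun j =>
    Complex.hasSum_taylorSeries_neg_log (by simpa [hw, abs_of_nonneg hr0] using hr1)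
  have hterm : ∀ k : ℕ, Tendsto (fun n : ℕ =>
      (1 / n : ℂ) * ∑ j ∈ Finset.Icc 1 n, (r * w ^ j : ℂ) ^ k / k) atTop (nhds 0) := by
    intro k
    rcases Nat.eq_zero_or_pos k with rfl | hk
    · simp
    have h := (tendsto_average_pow_of_norm_eq_one (z := w ^ k) (by simp [hw])
      (hroot k hk)).const_mul ((r : ℂ) ^ k / k)
    rw [mul_zero] at h
    refine h.congr fun n => ?_
    simp only [Finset.mul_sum]
    refine Finset.sum_congr rfl fun j _ => ?_
    rw [mul_pow, ← pow_mul, ← pow_mul, mul_comm k j]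
    ring
  have hbound : ∀ n k : ℕ,
      ‖(1 / n : ℂ) * ∑ j ∈ Finset.Icc 1 n, (r * w ^ j : ℂ) ^ k / k‖ ≤ r ^ k := by
    intro n k
    have hle : ∀ j ∈ Finset.Icc 1 n, ‖(r * w ^ j : ℂ) ^ k / k‖ ≤ r ^ k := by
      intro j _
      rcases Nat.eq_zero_or_pos k with rfl | hk
      · simp
      simp only [norm_div, norm_pow, norm_mul, hw, Complex.norm_real, Real.norm_eq_abs,
        abs_of_nonneg hr0, one_pow, mul_one, Complex.norm_natCast]
      exact div_le_self (by positivity) (by exact_mod_cast hk)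
    have hsum := norm_sum_le_of_le _ hle
    rw [Finset.sum_const, Nat.card_Icc, Nat.add_sub_cancel, nsmul_eq_mul] at hsum
    rcases Nat.eq_zero_or_pos n with rfl | hn
    · simpa using pow_nonneg hr0 k
    have hn' : (0 : ℝ) < n := by exact_mod_cast hn
    rw [norm_mul, norm_div, norm_one, Complex.norm_natCast]
    calc _ ≤ 1 / (n : ℝ) * (n * r ^ k) := by gcongr
      _ = r ^ k := by field_simp
  have hlim := tendsto_tsum_of_dominated_convergence
    (summable_geometric_of_lt_one hr0 hr1) hterm (Eventually.of_forall hbound)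
  rw [tsum_zero] at hlim
  have hneg := hlim.neg
  rw [neg_zero] at hneg
  refine hneg.congr fun n => ?_
  rw [((hasSum_sum fun j _ => hseries j).mul_left (1 / n : ℂ)).tsum_eq, Finset.sum_neg_distrib]
  ring

/-- The logarithm of `|1 - r e^{iθ}|²` as the real part of a complex logarithm. -/
lemma two_mul_re_log_one_sub_mul_exp (r θ : ℝ) :
    2 * (Complex.log (1 - r * Complex.exp (θ * Complex.I))).re =
      Real.log ((1 - r) ^ 2 + r * (2 - 2 * Real.cos θ)) := by
  have hsq : ‖1 - r * Complex.exp (θ * Complex.I)‖ ^ 2 =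
      (1 - r) ^ 2 + r * (2 - 2 * Real.cos θ) := by
    rw [← Complex.normSq_eq_norm_sq, Complex.normSq_apply]
    simp only [Complex.sub_re, Complex.sub_im, Complex.one_re, Complex.one_im,
      Complex.re_ofReal_mul, Complex.im_ofReal_mul, Complex.exp_ofReal_mul_I_re, Complex.exp_ofReal_mul_I_im]
    linear_combination r ^ 2 * Real.sin_sq_add_cos_sq θ
  rw [Complex.log_re, ← hsq, Real.log_pow]
  norm_num

/-- For irrational `α` and `0 ≤ r < 1`, the averages of `log |1 - r e^{2πijα}|²` tend to zero. -/
lemma tendsto_average_log_regularized {α : ℝ} (hα : Irrational α) {r : ℝ} (hr0 : 0 ≤ r)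
    (hr1 : r < 1) :
    Tendsto (fun n : ℕ => (1 / n : ℝ) * ∑ j ∈ Finset.Icc 1 n,
      Real.log ((1 - r) ^ 2 + r * (2 - 2 * Real.cos (2 * Real.pi * j * α)))) atTop (nhds 0) := by
  set w : ℂ := Complex.exp ((2 * Real.pi * α : ℝ) * Complex.I) with hw
  have hpow : ∀ j : ℕ, w ^ j = Complex.exp ((2 * Real.pi * j * α : ℝ) * Complex.I) := by
    intro j
    rw [hw, ← Complex.exp_nat_mul]
    push_cast
    ring_nf
  have hroot : ∀ k : ℕ, 0 < k → w ^ k ≠ 1 := by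
    intro k hk h
    rw [hpow, Complex.exp_eq_one_iff] at h
    obtain ⟨m, hm⟩ := h
    have hm' := congrArg Complex.im hm
    simp only [Complex.mul_im, Complex.ofReal_re, Complex.ofReal_im, Complex.I_re, Complex.I_im,
      Complex.intCast_re, Complex.intCast_im, Complex.mul_re, Complex.re_ofNat,
      Complex.im_ofNat] at hm'
    have hpi := Real.pi_pos
    refine (hα.natCast_mul hk.ne').ne_int m ?_
    have : 2 * Real.pi * (k * α) = 2 * Real.pi * m := by linarith
    exact mul_left_cancel₀ (by positivity) this
  have h := tendsto_average_log_one_sub_mul_pow (Complex.norm_exp_ofReal_mul_I _) hroot hr0 hr1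
  have h' := ((Complex.continuous_re.tendsto 0).comp h).const_mul 2
  rw [Complex.zero_re, mul_zero] at h'
  refine h'.congr fun n => ?_
  have hcast : (1 / n : ℂ) = ((1 / n : ℝ) : ℂ) := by push_cast; rfl
  simp only [Function.comp_apply, hcast, Complex.re_ofReal_mul, Complex.re_sum]
  rw [mul_left_comm, Finset.mul_sum]
  congr 1
  refine Finset.sum_congr rfl fun j _ => ?_
  rw [← hw, hpow, two_mul_re_log_one_sub_mul_exp]

lemma sixteen_mul_sq_sub_round_le (x : ℝ) :
    16 * |x - round x| ^ 2 ≤ 2 - 2 * Real.cos (2 * Real.pi * x) := by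
  set y := |x - round x| with hy
  have hcos : Real.cos (2 * Real.pi * x) = Real.cos (2 * (Real.pi * y)) := by
    have : Real.cos (2 * (Real.pi * y)) = Real.cos (2 * Real.pi * (x - round x)) := by
      rw [← Real.cos_abs (2 * Real.pi * (x - round x)), abs_mul,
        abs_of_pos Real.two_pi_pos, ← hy, mul_assoc]
    rw [this, mul_sub, mul_comm (2 * Real.pi) (round x : ℝ), Real.cos_sub_int_mul_two_pi]
  have hy0 : 0 ≤ y := abs_nonneg _
  have hy1 : y ≤ 1 / 2 := abs_sub_round x
  have hpi := Real.pi_pos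
  have hsin := Real.mul_le_sin (x := Real.pi * y) (by positivity) (by nlinarith)
  have h2 : 2 / Real.pi * (Real.pi * y) = 2 * y := by field_simp
  rw [h2] at hsin
  rw [hcos, Real.cos_two_mul, Real.cos_sq']
  nlinarith

lemma sum_inv_sqrt_le (M : ℕ) : ∑ m ∈ Finset.Icc 1 M, 1 / √(m : ℝ) ≤ 2 * √(M : ℝ) := by
  induction M with
  | zero => simp
  | succ M ih =>
    rw [Finset.sum_Icc_succ_top (by omega)]
    have h1 : 0 < √((M + 1 : ℕ) : ℝ) := Real.sqrt_pos.2 (by positivity)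
    have h2 := Real.sqrt_nonneg (M : ℝ)
    have s1 := Real.sq_sqrt (show (0 : ℝ) ≤ ((M + 1 : ℕ) : ℝ) by positivity)
    have s2 := Real.sq_sqrt (show (0 : ℝ) ≤ (M : ℝ) by positivity)
    push_cast at *
    have : 1 / √((M : ℝ) + 1) ≤ 2 * √((M : ℝ) + 1) - 2 * √(M : ℝ) := by
      rw [div_le_iff₀ h1]
      nlinarith [sq_nonneg (√((M : ℝ) + 1) - √(M : ℝ))]
    linarith

/-- The distances of `jα` to the nearest integer, `1 ≤ j ≤ n`, are separated by `c / (2n)` when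
`α` is badly approximable with constant `c`. -/
lemma div_le_abs_sub_dist_round {α c : ℝ} (hc : 0 < c)
    (hbad : ∀ (p : ℤ) (q : ℕ), 0 < q → c / (q : ℝ) ^ 2 ≤ |α - p / q|) {n j k : ℕ}
    (hjk : j < k) (hk : k ≤ n) :
    c / (2 * n) ≤ |(|j * α - round (j * α)| - |k * α - round (k * α)|)| := by
  have key : ∀ (p : ℤ) (q : ℕ), 0 < q → q ≤ 2 * n → c / (2 * n) ≤ |q * α - p| := by
    intro p q hq hqn
    have hq' : (0 : ℝ) < q := by exact_mod_cast hq
    have hqn' : (q : ℝ) ≤ 2 * n := by exact_mod_cast hqn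
    have heq : |q * α - p| = q * |α - p / q| := by
      rw [← abs_of_pos hq', ← abs_mul, abs_of_pos hq']
      congr 1
      field_simp
    rw [heq]
    calc c / (2 * n) ≤ c / q := by gcongr
      _ = q * (c / (q : ℝ) ^ 2) := by field_simp
      _ ≤ _ := by gcongr; exact hbad p q hq
  have hadd := key (round (j * α) + round (k * α)) (j + k) (by omega) (by omega)
  have hsub := key (round (k * α) - round (j * α)) (k - j) (by omega) (by omega)
  push_cast [Nat.cast_sub hjk.le] at hadd hsub
  rcases abs_cases (j * α - round (j * α)) with ⟨h1, _⟩ | ⟨h1, _⟩ <;>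
    rcases abs_cases (k * α - round (k * α)) with ⟨h2, _⟩ | ⟨h2, _⟩ <;> rw [h1, h2]
  · rw [abs_sub_comm]; convert hsub using 2; ring
  · convert hadd using 2; ring
  · rw [abs_sub_comm]; convert hadd using 2; ring
  · convert hsub using 2; ring

/-- For a badly approximable rotation, the sum of the inverse square roots of the distances of the
first `n` orbit points to the nearest integer is `O(n)`. -/
lemma sum_sqrt_inv_dist_round_le {α c : ℝ} (hc : 0 < c)
    (hbad : ∀ (p : ℤ) (q : ℕ), 0 < q → c / (q : ℝ) ^ 2 ≤ |α - p / q|) {n : ℕ} (hn : 0 < n) :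
    ∑ j ∈ Finset.Icc 1 n, √(1 / |j * α - round (j * α)|) ≤ 4 * n / c := by
  have hn' : (0 : ℝ) < n := by exact_mod_cast hn
  set d : ℕ → ℝ := fun j => |j * α - round (j * α)| with hd
  set s : ℝ := c / (2 * n) with hs
  have hs0 : 0 < s := by positivity
  have hsep : ∀ {j k : ℕ}, j < k → k ≤ n → s ≤ |d j - d k| := fun hjk hk =>
    div_le_abs_sub_dist_round hc hbad hjk hk
  have hd0 : ∀ j ∈ Finset.Icc 1 n, s ≤ d j := by
    intro j hj
    rw [Finset.mem_Icc] at hj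
    have := hsep (j := 0) (k := j) (by omega) hj.2
    simpa [hd] using this
  set m : ℕ → ℕ := fun j => ⌊d j / s⌋₊
  have hm1 : ∀ j ∈ Finset.Icc 1 n, 1 ≤ m j := fun j hj =>
    Nat.le_floor (by rw [Nat.cast_one, one_le_div hs0]; exact hd0 j hj)
  have hmd : ∀ j, (m j : ℝ) * s ≤ d j := fun j =>
    (le_div_iff₀ hs0).1 (Nat.floor_le (div_nonneg (abs_nonneg _) hs0.le))
  have hdm : ∀ j, d j < (m j + 1) * s := fun j =>
    (div_lt_iff₀ hs0).1 (Nat.lt_floor_add_one _)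
  have hne : ∀ {j k : ℕ}, j < k → k ≤ n → m j ≠ m k := by
    intro j k hjk hk h
    have h1 := hsep hjk hk
    have h2 := hmd j
    have h3 := hdm j
    rw [h] at h2 h3
    have h4 := hmd k
    have h5 := hdm k
    exact absurd h1 (not_le.2 (abs_lt.2 ⟨by linarith, by linarith⟩))
  have hinj : Set.InjOn m (Finset.Icc 1 n) := by
    intro j hj k hk h
    rw [Finset.mem_coe, Finset.mem_Icc] at hj hk
    rcases lt_trichotomy j k with hjk | hjk | hjk
    · exact absurd h (hne hjk hk.2)
    · exact hjk
    · exact absurd h.symm (hne hjk hj.2)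
  set M : ℕ := ⌊n / c⌋₊
  have hmM : ∀ j, m j ≤ M := by
    intro j
    refine Nat.floor_le_floor ?_
    rw [hs, div_le_div_iff₀ (by positivity) hc, mul_div_assoc',
      le_div_iff₀ (by positivity)]
    have : d j ≤ 1 / 2 := abs_sub_round _
    nlinarith [mul_pos hc hn']
  calc ∑ j ∈ Finset.Icc 1 n, √(1 / d j)
      ≤ ∑ j ∈ Finset.Icc 1 n, √(1 / s) * (1 / √(m j : ℝ)) := by
        refine Finset.sum_le_sum fun j hj => ?_
        have hmj : (0 : ℝ) < m j := by exact_mod_cast hm1 j hj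
        have hinv : 1 / √(m j : ℝ) = √(1 / (m j : ℝ)) := by simp
        rw [hinv, ← Real.sqrt_mul (by positivity)]
        refine Real.sqrt_le_sqrt ?_
        rw [one_div_mul_one_div, mul_comm s]
        exact one_div_le_one_div_of_le (by positivity) (hmd j)
    _ = √(1 / s) * ∑ i ∈ (Finset.Icc 1 n).image m, 1 / √(i : ℝ) := by
        rw [Finset.sum_image hinj, Finset.mul_sum]
    _ ≤ √(1 / s) * ∑ i ∈ Finset.Icc 1 M, 1 / √(i : ℝ) := by
        gcongr
        intro i hi
        obtain ⟨j, hj, rfl⟩ := Finset.mem_image.1 hi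
        exact Finset.mem_Icc.2 ⟨hm1 j hj, hmM j⟩
    _ ≤ √(1 / s) * (2 * √(M : ℝ)) := by gcongr; exact sum_inv_sqrt_le M
    _ ≤ √(4 * (n / c)) * (2 * √(n / c)) := by
        gcongr
        · rw [hs, one_div_div]
          have : 0 < n / c := by positivity
          rw [mul_div_assoc]
          linarith
        · exact Nat.floor_le (by positivity)
    _ = 4 * n / c := by
        rw [Real.sqrt_mul (by norm_num), show (4 : ℝ) = 2 ^ 2 by norm_num,
          Real.sqrt_sq (by norm_num)]
        have := Real.mul_self_sqrt (show 0 ≤ n / c by positivity)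
        linear_combination 4 * this

lemma log_one_add_sq_div_le {δ y D : ℝ} (hδ : 0 ≤ δ) (hy : 0 < y) (hD : 16 * y ^ 2 ≤ D) :
    Real.log (1 + δ ^ 2 / D) ≤ 4 * (√δ * √(1 / y)) := by
  set t := √δ * √(1 / y) with ht
  have ht0 : 0 ≤ t := by positivity
  have ht2 : t ^ 2 = δ / y := by
    rw [ht, mul_pow, Real.sq_sqrt hδ, Real.sq_sqrt (by positivity)]
    ring
  have hD0 : 0 < D := lt_of_lt_of_le (by positivity) hD
  have hle : δ ^ 2 / D ≤ t ^ 4 := by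
    calc δ ^ 2 / D ≤ δ ^ 2 / y ^ 2 := by gcongr; nlinarith [sq_nonneg y]
      _ = (t ^ 2) ^ 2 := by rw [ht2, div_pow]
      _ = t ^ 4 := by ring
  calc Real.log (1 + δ ^ 2 / D) ≤ Real.log ((1 + t) ^ 4) := by
        refine Real.log_le_log (by positivity) ?_
        nlinarith [pow_nonneg ht0 3, sq_nonneg t]
    _ = 4 * Real.log (1 + t) := by rw [Real.log_pow]; norm_num
    _ ≤ 4 * t := by
        have := Real.log_le_sub_one_of_pos (show 0 < 1 + t by positivity)
        linarith

/-- for a badly approximable irrational `α`, the Birkhoff averages of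
`log(2 - 2cos(2π·α))` along the orbit of `0` under the rotation by `α` tend to zero:
`(1/n)·Σ_{j=1}^n log(2 - 2cos(2πjα)) → 0`. -/
theorem stmt8 (α : ℝ) (hirr : Irrational α)
    (hbad : ∃ c > (0 : ℝ), ∀ (p : ℤ) (q : ℕ), 0 < q → c / (q : ℝ) ^ 2 ≤ |α - p / q|) :
    Tendsto
      (fun n : ℕ => (1 / n : ℝ) *
        ∑ j ∈ Finset.Icc 1 n, Real.log (2 - 2 * Real.cos (2 * Real.pi * j * α)))
      atTop (nhds 0) := by
  obtain ⟨c, hc, hbad⟩ := hbad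
  set D : ℕ → ℝ := fun j => 2 - 2 * Real.cos (2 * Real.pi * j * α) with hDdef
  have hdist : ∀ j : ℕ, 0 < j → 0 < |j * α - round (j * α)| := fun j hj =>
    abs_pos.2 (sub_ne_zero.2 ((hirr.natCast_mul hj.ne').ne_int _))
  have hDlow : ∀ j : ℕ, 16 * |j * α - round (j * α)| ^ 2 ≤ D j := fun j => by
    simpa only [hDdef, mul_assoc] using sixteen_mul_sq_sub_round_le (j * α)
  have hDpos : ∀ j : ℕ, 0 < j → 0 < D j := fun j hj =>
    lt_of_lt_of_le (by have := hdist j hj; positivity) (hDlow j)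
  have hupper : ∀ r : ℝ, 0 < r → ∀ n : ℕ, 0 < n →
      (1 / n : ℝ) * ∑ j ∈ Finset.Icc 1 n, Real.log (D j) ≤
        (1 / n : ℝ) * ∑ j ∈ Finset.Icc 1 n, Real.log ((1 - r) ^ 2 + r * D j) - Real.log r := by
    intro r hr n hn
    have hn' : (0 : ℝ) < n := by exact_mod_cast hn
    have h : ∑ j ∈ Finset.Icc 1 n, Real.log (D j) ≤
        ∑ j ∈ Finset.Icc 1 n, (Real.log ((1 - r) ^ 2 + r * D j) - Real.log r) := by
      refine Finset.sum_le_sum fun j hj => ?_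
      have hj := hDpos j (Finset.mem_Icc.1 hj).1
      rw [le_sub_iff_add_le, add_comm, ← Real.log_mul hr.ne' hj.ne']
      exact Real.log_le_log (by positivity) (by nlinarith [sq_nonneg (1 - r)])
    rw [Finset.sum_sub_distrib, Finset.sum_const, Nat.card_Icc, Nat.add_sub_cancel,
      nsmul_eq_mul] at h
    calc _ ≤ (1 / n : ℝ) * (∑ j ∈ Finset.Icc 1 n, Real.log ((1 - r) ^ 2 + r * D j)
          - n * Real.log r) := by gcongr
      _ = _ := by field_simp
  have hlower : ∀ r : ℝ, 0 < r → r < 1 → ∀ n : ℕ, 0 < n →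
      (1 / n : ℝ) * ∑ j ∈ Finset.Icc 1 n, Real.log ((1 - r) ^ 2 + r * D j)
        - 16 / c * √(1 - r) ≤ (1 / n : ℝ) * ∑ j ∈ Finset.Icc 1 n, Real.log (D j) := by
    intro r hr hr1 n hn
    have hn' : (0 : ℝ) < n := by exact_mod_cast hn
    have h : ∑ j ∈ Finset.Icc 1 n, Real.log ((1 - r) ^ 2 + r * D j) ≤
        ∑ j ∈ Finset.Icc 1 n, (Real.log (D j) +
          4 * √(1 - r) * √(1 / |j * α - round (j * α)|)) := by
      refine Finset.sum_le_sum fun j hj => ?_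
      have hj0 := (Finset.mem_Icc.1 hj).1
      have hj := hDpos j hj0
      have hlog := log_one_add_sq_div_le (sub_nonneg.2 hr1.le) (hdist j hj0) (hDlow j)
      have hle : Real.log ((1 - r) ^ 2 + r * D j) ≤
          Real.log (D j) + Real.log (1 + (1 - r) ^ 2 / D j) := by
        rw [← Real.log_mul hj.ne' (by positivity)]
        refine Real.log_le_log (by positivity) ?_
        have : D j * (1 + (1 - r) ^ 2 / D j) = D j + (1 - r) ^ 2 := by field_simp
        rw [this]
        nlinarith
      linarith
    rw [Finset.sum_add_distrib, ← Finset.mul_sum] at h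
    have hs := sum_sqrt_inv_dist_round_le hc hbad hn
    rw [sub_le_iff_le_add]
    calc _ ≤ (1 / n : ℝ) * (∑ j ∈ Finset.Icc 1 n, Real.log (D j)
          + 4 * √(1 - r) * (4 * n / c)) := by
          gcongr
          refine h.trans ?_
          gcongr
      _ = _ := by field_simp; ring
  rw [Metric.tendsto_atTop']
  intro ε hε
  have hlim1 : Tendsto (fun r : ℝ => Real.log r) (nhdsWithin 1 (Set.Iio 1)) (nhds 0) := by
    have := (Real.continuousAt_log one_ne_zero).tendsto
    rw [Real.log_one] at this
    exact this.mono_left nhdsWithin_le_nhds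
  have hlim2 : Tendsto (fun r : ℝ => 16 / c * √(1 - r)) (nhdsWithin 1 (Set.Iio 1)) (nhds 0) := by
    have hcont : Continuous fun r : ℝ => 16 / c * √(1 - r) := by fun_prop
    have := hcont.tendsto 1
    simp only [sub_self, Real.sqrt_zero, mul_zero] at this
    exact this.mono_left nhdsWithin_le_nhds
  obtain ⟨r, ⟨hr1, hr2⟩, hr0, hrlt⟩ := (((hlim1.eventually_const_lt
    (show -(ε / 2) < 0 by linarith)).and (hlim2.eventually_lt_const (half_pos hε))).and
      (Ioo_mem_nhdsLT (zero_lt_one' ℝ))).exists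
  obtain ⟨N, hN⟩ := Metric.tendsto_atTop'.1
    (tendsto_average_log_regularized hirr hr0.le hrlt) (ε / 2) (half_pos hε)
  refine ⟨N, fun n hn => ?_⟩
  have hNn := hN n hn
  have hn0 : 0 < n := by omega
  have hu := hupper r hr0 n hn0
  have hl := hlower r hr0 hrlt n hn0
  rw [Real.dist_eq, sub_zero, abs_lt] at hNn ⊢
  constructor <;> linarith [hNn.1, hNn.2]
end

section
/- For every real number x that is not an integer multiple of 2π, the series Σ_{k≥1} (e^{ikx} + e^{−ikx})/k = Σ_{k≥1} 2·cos(kx)/k converges and its sum equals −log(2 − 2cos x). -/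
open Filter

/-- On the unit circle away from `1`, the partial sums of `∑ z ^ n / n` are Cauchy. -/
theorem cauchySeq_sum_pow_div_of_norm_eq_one {z : ℂ} (hz : ‖z‖ = 1) (hz1 : z ≠ 1) :
    CauchySeq (fun N : ℕ => ∑ n ∈ Finset.range N, z ^ n / n) := by
  have hanti : Antitone (fun n : ℕ => 1 / ((n : ℝ) + 1)) :=
    fun a b hab => Nat.one_div_le_one_div hab
  have hbound (N : ℕ) : ‖∑ n ∈ Finset.range N, z ^ (n + 1)‖ ≤ 2 / ‖z - 1‖ := by
    simp_rw [pow_succ]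
    rw [← Finset.sum_mul, geom_sum_eq hz1, norm_mul, hz, mul_one, norm_div]
    gcongr
    calc ‖z ^ N - 1‖ ≤ ‖z ^ N‖ + ‖(1 : ℂ)‖ := norm_sub_le _ _
      _ = 2 := by rw [norm_pow, hz]; norm_num
  rw [← cauchySeq_shift 1]
  convert! hanti.cauchySeq_series_mul_of_tendsto_zero_of_bounded
    tendsto_one_div_add_atTop_nhds_zero_nat hbound using 2 with N
  rw [Finset.sum_range_succ']
  simp [div_eq_inv_mul]

/-- The Taylor series of `-log (1 - z)` converges to it on the unit circle away from `1`. -/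
theorem tendsto_sum_pow_div_of_norm_eq_one {z : ℂ} (hz : ‖z‖ = 1) (hz1 : z ≠ 1) :
    Tendsto (fun N : ℕ => ∑ n ∈ Finset.range N, z ^ n / n) atTop
      (nhds (-Complex.log (1 - z))) := by
  obtain ⟨l, hl⟩ :=
    cauchySeq_tendsto_of_complete (cauchySeq_sum_pow_div_of_norm_eq_one hz hz1)
  have habel := tendsto_map'_iff.mp (Complex.tendsto_tsum_powerSeries_nhdsWithin_lt hl)
  have hslit : 1 - z ∈ Complex.slitPlane := by
    refine Or.inl ?_
    have hre : z.re ≠ 1 := fun h => hz1 <| by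
      have him : z.im = 0 := by
        have := Complex.sq_norm z
        rw [hz, Complex.normSq_apply, h] at this
        nlinarith
      exact Complex.ext h him
    have hle := Complex.re_le_norm z
    rw [hz] at hle
    simpa using lt_of_le_of_ne hle hre
  have hlog : Tendsto (fun t : ℝ => -Complex.log (1 - z * t)) (nhdsWithin 1 (Set.Iio 1))
      (nhds (-Complex.log (1 - z))) := by
    have hcont : ContinuousAt (fun t : ℝ => -Complex.log (1 - z * t)) 1 :=
      (ContinuousAt.clog (by fun_prop) (by simpa using hslit)).neg
    simpa using hcont.tendsto.mono_left nhdsWithin_le_nhds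
  have hlim : l = -Complex.log (1 - z) := by
    refine tendsto_nhds_unique habel (hlog.congr' ?_)
    filter_upwards [Ioo_mem_nhdsLT (zero_lt_one' ℝ)] with t ht
    have hzt : ‖z * t‖ < 1 := by
      simpa [hz, abs_of_pos ht.1] using ht.2
    rw [← (Complex.hasSum_taylorSeries_neg_log hzt).tsum_eq]
    simp [mul_pow, div_mul_eq_mul_div]
  exact hlim ▸ hl

/-- for real `x` not an integer multiple of `2π`, the series
`Σ_{k≥1} (e^{ikx} + e^{-ikx})/k = Σ_{k≥1} 2cos(kx)/k` converges (as a limit of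
partial sums) and its sum equals `-log(2 - 2cos x)`. -/
theorem stmt9 (x : ℝ) (hx : ∀ n : ℤ, x ≠ 2 * Real.pi * n) :
    Tendsto (fun N : ℕ => ∑ k ∈ Finset.Icc 1 N, 2 * Real.cos (k * x) / k)
      atTop (nhds (-Real.log (2 - 2 * Real.cos x))) := by
  set z : ℂ := Complex.exp (x * Complex.I) with hz_def
  have hz1 : z ≠ 1 := fun h => by
    obtain ⟨n, hn⟩ := Complex.exp_eq_one_iff.mp h
    refine hx n ?_
    have him := congrArg Complex.im hn
    simp at him
    linarith
  have hz : ‖z‖ = 1 := Complex.norm_exp_ofReal_mul_I x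
  have hre := ((Complex.continuous_re.tendsto _).comp
    ((tendsto_sum_pow_div_of_norm_eq_one hz hz1).comp (tendsto_add_atTop_nat 1))).const_mul 2
  have hsq : ‖1 - z‖ ^ 2 = 2 - 2 * Real.cos x := by
    rw [Complex.sq_norm, Complex.normSq_apply]
    simp [hz_def, Complex.exp_ofReal_mul_I_re, Complex.exp_ofReal_mul_I_im]
    linarith [Real.sin_sq_add_cos_sq x]
  have hterm (k : ℕ) : (z ^ k / k).re = Real.cos (k * x) / k := by
    rw [hz_def, ← Complex.exp_nat_mul, ← mul_assoc, Complex.div_natCast_re]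
    congr 1
    exact_mod_cast Complex.exp_ofReal_mul_I_re (k * x)
  convert! hre using 2 with N
  · simp only [Function.comp_apply, Complex.re_sum, hterm]
    rw [Finset.range_eq_Ico, Finset.sum_eq_sum_Ico_succ_bot (Nat.succ_pos N)]
    simp [mul_div_assoc, Finset.mul_sum]
    rfl
  · rw [← hsq, Real.log_pow, Complex.neg_re, Complex.log_re]
    push_cast
    ring
end

section
/- Let α = (√5 − 1)/2 be the golden mean and Sℓ(n) = Σ_{j=1}^{n} log(2 − 2cos(2πjα)). Then limsup_{n→∞} Sℓ(n)/log(n) = 2. -/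
open Filter

namespace GoldenSudler

/-- The inverse golden ratio. -/
noncomputable def gold : ℝ := (Real.sqrt 5 - 1) / 2

lemma gold_sq : gold ^ 2 = 1 - gold := by
  have h : Real.sqrt 5 ^ 2 = 5 := Real.sq_sqrt (by norm_num)
  unfold gold
  linear_combination h / 4

lemma gold_lower : 0.618 < gold := by
  have : (2.236 : ℝ) < Real.sqrt 5 := Real.lt_sqrt_of_sq_lt (by norm_num)
  unfold gold
  linarith

lemma gold_upper : gold < 0.6181 := by
  have : Real.sqrt 5 < 2.2362 := by
    rw [Real.sqrt_lt' (by norm_num)]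
    norm_num
  unfold gold
  linarith

lemma gold_pos : 0 < gold := by linarith [gold_lower]

lemma gold_cube : gold ^ 3 = 2 * gold - 1 := by
  linear_combination (gold - 1) * gold_sq

/-- The signed distance from `fib k * gold` to its nearest integer. -/
noncomputable def fibDist (k : ℕ) : ℝ := -(-gold) ^ k

lemma fibDist_succ (k : ℕ) : fibDist (k + 1) = -gold * fibDist k := by
  unfold fibDist
  ring

lemma fibDist_add_two (k : ℕ) : fibDist (k + 2) = gold ^ 2 * fibDist k := by
  unfold fibDist
  ring

lemma fibDist_ne_zero (k : ℕ) : fibDist k ≠ 0 :=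
  neg_ne_zero.mpr (pow_ne_zero _ (neg_ne_zero.mpr gold_pos.ne'))

lemma abs_fibDist (k : ℕ) : |fibDist k| = gold ^ k := by
  rw [fibDist, abs_neg, abs_pow, abs_neg, abs_of_pos gold_pos]

lemma fib_succ_mul_gold (k : ℕ) :
    (Nat.fib (k + 1) : ℝ) * gold = Nat.fib k + fibDist (k + 1) := by
  induction k using Nat.twoStepInduction with
  | zero => simp [fibDist]
  | one =>
    simp only [fibDist]
    norm_num
    linear_combination gold_sq
  | more k h1 h2 =>
    have h3 : (Nat.fib (k + 2 + 1) : ℝ) = Nat.fib (k + 1) + Nat.fib (k + 1 + 1) := by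
      exact_mod_cast Nat.fib_add_two
    have h4 : (Nat.fib (k + 2) : ℝ) = Nat.fib k + Nat.fib (k + 1) := by
      exact_mod_cast Nat.fib_add_two
    rw [fibDist_succ (k + 2), fibDist_succ (k + 1)]
    rw [fibDist_succ (k + 1)] at h2
    linear_combination h1 + h2 + gold * h3 - h4 - fibDist (k + 1) * gold_sq

lemma exists_int_fib_mul_gold (k : ℕ) :
    ∃ m : ℤ, (Nat.fib k : ℝ) * gold = m + fibDist k := by
  cases k with
  | zero => exact ⟨1, by simp [fibDist]⟩
  | succ k => exact ⟨Nat.fib k, by simpa using fib_succ_mul_gold k⟩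

/-- Coordinates of an integer vector in the basis given by consecutive Fibonacci vectors. -/
lemma exists_fib_coords (k : ℕ) (r p : ℤ) :
    ∃ u v : ℤ, r = u * Nat.fib (k + 1) + v * Nat.fib k ∧
      r * gold - p = fibDist k * (v - u * gold) := by
  induction k with
  | zero => exact ⟨r, p, by simp, by simp [fibDist]⟩
  | succ k ih =>
    obtain ⟨u, v, h1, h2⟩ := ih
    refine ⟨v, u - v, ?_, ?_⟩
    · rw [Nat.fib_add_two, h1]
      push_cast
      ring
    · rw [h2, fibDist_succ]
      push_cast
      linear_combination -v * fibDist k * gold_sq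

lemma shift_ne_int {k r : ℕ} (hk : 1 ≤ k) (hr : 1 ≤ r) (hr' : r ≤ Nat.fib (k + 1)) {w : ℝ}
    (hw : -1 < w) (hw' : w < gold) (p : ℤ) : (p : ℝ) ≠ r * gold + fibDist k * w := by
  intro h
  obtain ⟨u, v, h1, h2⟩ := exists_fib_coords k r p
  have hg := gold_pos
  have hf : 0 < Nat.fib k := Nat.fib_pos.mpr hk
  have hf' : 0 < Nat.fib (k + 1) := Nat.fib_pos.mpr (by omega)
  have h3 : (v : ℝ) - u * gold + w = 0 := by
    have : fibDist k * ((v : ℝ) - u * gold + w) = 0 := by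
      rw [mul_add, ← h2]
      push_cast
      linarith
    exact (mul_eq_zero.mp this).resolve_left (fibDist_ne_zero k)
  rcases lt_trichotomy v 0 with hv | hv | hv
  · have hu : 1 ≤ u := by
      by_contra! hu
      nlinarith
    have hu' : (1 : ℝ) ≤ u := by exact_mod_cast hu
    have hv' : (v : ℝ) ≤ -1 := by exact_mod_cast Int.le_sub_one_of_lt hv
    nlinarith
  · subst hv
    have hu : 1 ≤ u := by
      by_contra! hu
      nlinarith
    have hu' : (1 : ℝ) ≤ u := by exact_mod_cast hu
    norm_num at h3
    nlinarith
  · have hu : u ≤ 0 := by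
      by_contra! hu
      nlinarith
    have hu' : (u : ℝ) ≤ 0 := by exact_mod_cast hu
    have hv' : (1 : ℝ) ≤ v := by exact_mod_cast hv
    nlinarith

lemma punctured_shift_ne_int {k r : ℕ} (hk : 1 ≤ k) (hr : 1 ≤ r) (hr' : r < Nat.fib (k + 1))
    (hrk : r ≠ Nat.fib k) {w : ℝ} (hw : |w| < 1 + gold) (p : ℤ) :
    (p : ℝ) ≠ r * gold + fibDist k * w := by
  intro h
  obtain ⟨u, v, h1, h2⟩ := exists_fib_coords k r p
  obtain ⟨hw1, hw2⟩ := abs_lt.mp hw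
  have hg := gold_pos
  have hg' := gold_upper
  have hf : 0 < Nat.fib k := Nat.fib_pos.mpr hk
  have hf' : 0 < Nat.fib (k + 1) := Nat.fib_pos.mpr (by omega)
  have h3 : (v : ℝ) - u * gold + w = 0 := by
    have : fibDist k * ((v : ℝ) - u * gold + w) = 0 := by
      rw [mul_add, ← h2]
      push_cast
      linarith
    exact (mul_eq_zero.mp this).resolve_left (fibDist_ne_zero k)
  rcases lt_trichotomy v 0 with hv | hv | hv
  · have hu : 1 ≤ u := by
      by_contra! hu
      nlinarith
    have hu' : (1 : ℝ) ≤ u := by exact_mod_cast hu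
    have hv' : (v : ℝ) ≤ -1 := by exact_mod_cast Int.le_sub_one_of_lt hv
    nlinarith
  · subst hv
    have hu : 1 ≤ u := by
      by_contra! hu
      nlinarith
    nlinarith
  · have hu : u ≤ 0 := by
      by_contra! hu
      nlinarith
    rcases hu.lt_or_eq with hu | hu
    · have hu' : (u : ℝ) ≤ -1 := by exact_mod_cast Int.le_sub_one_of_lt hu
      have hv' : (1 : ℝ) ≤ v := by exact_mod_cast hv
      nlinarith
    · subst hu
      have hv1 : v ≠ 1 := by
        rintro rfl
        exact hrk (by exact_mod_cast (by simpa using h1 : (r : ℤ) = Nat.fib k))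
      have hv' : (2 : ℝ) ≤ v := by exact_mod_cast (by omega : 2 ≤ v)
      norm_num at h3
      linarith

/-- The logarithm of the chord length `|1 - exp (2 π i x)|`. -/
noncomputable def logChord (x : ℝ) : ℝ := Real.log |2 * Real.sin (Real.pi * x)|

lemma logChord_neg (x : ℝ) : logChord (-x) = logChord x := by
  simp [logChord, abs_mul]

lemma logChord_int_add (m : ℤ) (x : ℝ) : logChord (m + x) = logChord x := by
  unfold logChord
  rw [show Real.pi * (m + x) = Real.pi * x + m * Real.pi by ring, Real.sin_add_int_mul_pi,
    abs_mul, abs_mul, abs_mul, abs_zpow]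
  simp

lemma logChord_fibDist_mul (k : ℕ) (x : ℝ) :
    logChord (fibDist k * x) = logChord (gold ^ k * x) := by
  rcases abs_cases (fibDist k) with ⟨h, -⟩ | ⟨h, -⟩
  · rw [← abs_fibDist, h]
  · rw [← abs_fibDist, h, neg_mul, logChord_neg]

lemma log_two_sub_two_mul_cos (x : ℝ) :
    Real.log (2 - 2 * Real.cos (2 * Real.pi * x)) = 2 * logChord x := by
  have h : 2 - 2 * Real.cos (2 * Real.pi * x) = (2 * Real.sin (Real.pi * x)) ^ 2 := by
    rw [mul_assoc, Real.cos_two_mul]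
    linear_combination -4 * Real.sin_sq_add_cos_sq (Real.pi * x)
  rw [h, logChord, Real.log_abs, Real.log_pow]
  norm_num

lemma logChord_concave_unit {x y a b : ℝ} (hx : 0 < x) (hx' : x < 1) (hy : 0 < y) (hy' : y < 1)
    (ha : 0 ≤ a) (hb : 0 ≤ b) (hab : a + b = 1) :
    a * logChord x + b * logChord y ≤ logChord (a * x + b * y) := by
  have hpi := Real.pi_pos
  have pos : ∀ z : ℝ, 0 < z → z < 1 → 0 < Real.sin (Real.pi * z) := fun z h h' =>
    Real.sin_pos_of_pos_of_lt_pi (by positivity) (by nlinarith)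
  have hsx := pos x hx hx'
  have hsy := pos y hy hy'
  have mem : ∀ z : ℝ, 0 < z → z < 1 → Real.pi * z ∈ Set.Icc 0 Real.pi := fun z h h' =>
    ⟨by positivity, by nlinarith⟩
  have hsin := strictConcaveOn_sin_Icc.concaveOn.2 (mem x hx hx') (mem y hy hy') ha hb hab
  have hlog := strictConcaveOn_log_Ioi.concaveOn.2
    (show 2 * Real.sin (Real.pi * x) ∈ Set.Ioi 0 from by simpa using hsx)
    (show 2 * Real.sin (Real.pi * y) ∈ Set.Ioi 0 from by simpa using hsy) ha hb hab
  simp only [smul_eq_mul] at hsin hlog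
  have hmid : 0 < a * (2 * Real.sin (Real.pi * x)) + b * (2 * Real.sin (Real.pi * y)) := by
    rcases ha.lt_or_eq with h | h
    · have := mul_pos h hsx
      have := mul_nonneg hb hsy.le
      linarith
    · have hb1 : b = 1 := by linarith
      subst h hb1
      linarith
  rw [show a * (Real.pi * x) + b * (Real.pi * y) = Real.pi * (a * x + b * y) by ring] at hsin
  unfold logChord
  rw [abs_of_pos (by positivity), abs_of_pos (by positivity), abs_of_pos (by linarith)]
  exact hlog.trans (Real.log_le_log hmid (by linarith))

lemma logChord_concave {x y a b : ℝ} (h : ∀ p : ℤ, (p : ℝ) ∉ Set.uIcc x y)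
    (ha : 0 ≤ a) (hb : 0 ≤ b) (hab : a + b = 1) :
    a * logChord x + b * logChord y ≤ logChord (a * x + b * y) := by
  have h1 := Int.floor_le x
  have h2 := Int.lt_floor_add_one x
  have h3 := h ⌊x⌋
  have h4 := h (⌊x⌋ + 1)
  push_cast at h4
  rw [Set.mem_uIcc, not_or, not_and, not_and] at h3 h4
  have h5 : (⌊x⌋ : ℝ) < y := by
    by_contra! hy
    exact h3.2 hy h1
  have h6 : y < ⌊x⌋ + 1 := by
    by_contra! hy
    exact h4.1 h2.le hy
  have h7 : (⌊x⌋ : ℝ) < x := lt_of_le_of_ne h1 fun e => h3.1 e.ge (e ▸ h5.le)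
  have key := logChord_concave_unit (x := x - ⌊x⌋) (y := y - ⌊x⌋) (by linarith) (by linarith)
    (by linarith) (by linarith) ha hb hab
  have shift : ∀ z : ℝ, logChord (z - ⌊x⌋) = logChord z := fun z => by
    rw [← logChord_int_add ⌊x⌋ (z - ⌊x⌋)]
    ring_nf
  rw [shift, shift, show a * (x - ⌊x⌋) + b * (y - ⌊x⌋) = a * x + b * y - ⌊x⌋ by
    linear_combination (-(⌊x⌋ : ℝ)) * hab, shift] at key
  exact key

/-- A concavity inequality for sums of `logChord` along a zero-free family of shifts. -/
lemma sum_logChord_concave {k : ℕ} (s : Finset ℕ) {w₁ w₂ a b : ℝ}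
    (h : ∀ r ∈ s, ∀ w ∈ Set.uIcc w₁ w₂, ∀ p : ℤ, (p : ℝ) ≠ r * gold + fibDist k * w)
    (ha : 0 ≤ a) (hb : 0 ≤ b) (hab : a + b = 1) :
    a * ∑ r ∈ s, logChord (r * gold + fibDist k * w₁) +
      b * ∑ r ∈ s, logChord (r * gold + fibDist k * w₂) ≤
      ∑ r ∈ s, logChord (r * gold + fibDist k * (a * w₁ + b * w₂)) := by
  rw [Finset.mul_sum, Finset.mul_sum, ← Finset.sum_add_distrib]
  refine Finset.sum_le_sum fun r hr => ?_
  have key := logChord_concave (x := r * gold + fibDist k * w₁)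
    (y := r * gold + fibDist k * w₂) (fun p hp => ?_) ha hb hab
  · refine key.trans_eq (congrArg logChord ?_)
    linear_combination (r * gold) * hab
  · refine h r hr ((p - r * gold) / fibDist k) ?_ p ?_
    · have hne := fibDist_ne_zero k
      rw [Set.mem_uIcc] at hp ⊢
      rcases lt_or_gt_of_ne hne with hneg | hpos
      · simp only [div_le_iff_of_neg hneg, le_div_iff_of_neg hneg]
        rcases hp with hp | hp
        · right; constructor <;> nlinarith
        · left; constructor <;> nlinarith
      · simp only [div_le_iff₀ hpos, le_div_iff₀ hpos]
        rcases hp with hp | hp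
        · left; constructor <;> nlinarith
        · right; constructor <;> nlinarith
    · rw [mul_div_cancel₀ _ (fibDist_ne_zero k)]
      ring

/-- The logarithm of the shifted Sudler product. -/
noncomputable def shiftedSum (m : ℕ) (θ : ℝ) : ℝ :=
  ∑ r ∈ Finset.Ico 1 (m + 1), logChord (r * gold + θ)

lemma shiftedSum_zero (θ : ℝ) : shiftedSum 0 θ = 0 := by simp [shiftedSum]

lemma shiftedSum_succ (m : ℕ) (θ : ℝ) :
    shiftedSum (m + 1) θ = shiftedSum m θ + logChord ((m + 1) * gold + θ) := by
  rw [shiftedSum, Finset.sum_Ico_succ_top (by omega), shiftedSum]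
  push_cast
  rfl

lemma shiftedSum_add (m n : ℕ) (θ : ℝ) :
    shiftedSum (m + n) θ = shiftedSum m θ + shiftedSum n (m * gold + θ) := by
  induction n with
  | zero => simp [shiftedSum_zero]
  | succ n ih =>
    rw [← add_assoc, shiftedSum_succ, shiftedSum_succ, ih, add_assoc]
    congr 3
    push_cast
    ring

lemma shiftedSum_int_add (m : ℕ) (p : ℤ) (θ : ℝ) :
    shiftedSum m (p + θ) = shiftedSum m θ := by
  refine Finset.sum_congr rfl fun r _ => ?_
  rw [← logChord_int_add p (r * gold + θ)]
  congr 1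
  ring

lemma shiftedSum_reflect (m l : ℕ) :
    shiftedSum m (-((m + l + 1 : ℕ) * gold)) + shiftedSum l 0 = shiftedSum (m + l) 0 := by
  induction m generalizing l with
  | zero => simp [shiftedSum_zero]
  | succ m ih =>
    have h := ih (l + 1)
    rw [shiftedSum_succ l, show m + (l + 1) = m + 1 + l by ring] at h
    rw [shiftedSum_succ, ← h, add_assoc, add_comm (shiftedSum l 0)]
    congr 2
    rw [← logChord_neg]
    congr 1
    push_cast
    ring

lemma shiftedSum_neg_fib_mul_gold (m k : ℕ) :
    shiftedSum m (-(Nat.fib k * gold)) = shiftedSum m (-fibDist k) := by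
  obtain ⟨p, hp⟩ := exists_int_fib_mul_gold k
  rw [hp, ← shiftedSum_int_add m (-p) (-fibDist k)]
  congr 1
  push_cast
  ring

/-- The logarithm of the Sudler product of length `fib k - 1`. -/
noncomputable def fibSum (k : ℕ) : ℝ := shiftedSum (Nat.fib k - 1) 0

lemma shiftedSum_reflect_fib {m l k : ℕ} (h : m + l + 1 = Nat.fib k) :
    shiftedSum m (-fibDist k) = fibSum k - shiftedSum l 0 := by
  have := shiftedSum_reflect m l
  rw [h, shiftedSum_neg_fib_mul_gold] at this
  rw [fibSum, show Nat.fib k - 1 = m + l by omega]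
  linarith

lemma shiftedSum_lower_endpoint {k : ℕ} (hk : 1 ≤ k) :
    shiftedSum (Nat.fib (k + 1)) (fibDist k * -gold ^ 2) = fibSum (k + 2) - fibSum k := by
  have hf : 0 < Nat.fib k := Nat.fib_pos.mpr hk
  have h : Nat.fib (k + 1) + (Nat.fib k - 1) + 1 = Nat.fib (k + 2) := by
    rw [Nat.fib_add_two]
    omega
  rw [fibSum.eq_1 k, ← shiftedSum_reflect_fib h, fibDist_add_two]
  congr 1
  ring

lemma shiftedSum_upper_endpoint (k : ℕ) :
    shiftedSum (Nat.fib (k + 1)) (fibDist k * gold ^ 3) = fibSum (k + 3) - fibSum (k + 2) := by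
  have hf : 0 < Nat.fib (k + 2) := Nat.fib_pos.mpr (by omega)
  have h : Nat.fib (k + 1) + (Nat.fib (k + 2) - 1) + 1 = Nat.fib (k + 3) := by
    rw [Nat.fib_add_two (n := k + 1), show k + 1 + 1 = k + 2 from rfl]
    omega
  rw [fibSum.eq_1 (k + 2), ← shiftedSum_reflect_fib h, fibDist_succ (k + 2), fibDist_add_two]
  congr 1
  ring

/-- Lower bound for a Fibonacci block with an admissible shift. -/
lemma min_le_shiftedSum_fib {k : ℕ} (hk : 1 ≤ k) {w : ℝ} (hw : -gold ^ 2 ≤ w)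
    (hw' : w ≤ gold ^ 3) :
    min (fibSum (k + 2) - fibSum k) (fibSum (k + 3) - fibSum (k + 2)) ≤
      shiftedSum (Nat.fib (k + 1)) (fibDist k * w) := by
  have hg := gold_lower
  have hg' := gold_upper
  have hsq := gold_sq
  have hcube := gold_cube
  obtain ⟨a, b, ha, hb, hab, rfl⟩ : w ∈ segment ℝ (-gold ^ 2) (gold ^ 3) := by
    rw [segment_eq_Icc (by linarith)]
    exact ⟨hw, hw'⟩
  have key := sum_logChord_concave (k := k) (Finset.Ico 1 (Nat.fib (k + 1) + 1))
    (w₁ := -gold ^ 2) (w₂ := gold ^ 3) (fun r hr w hw p => ?_) ha hb hab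
  · have e₁ := shiftedSum_lower_endpoint hk
    have e₂ := shiftedSum_upper_endpoint k
    rw [shiftedSum] at e₁ e₂ ⊢
    rw [e₁, e₂] at key
    refine le_trans ?_ key
    set M := min (fibSum (k + 2) - fibSum k) (fibSum (k + 3) - fibSum (k + 2))
    have h₁ : a * M ≤ a * (fibSum (k + 2) - fibSum k) :=
      mul_le_mul_of_nonneg_left (min_le_left _ _) ha
    have h₂ : b * M ≤ b * (fibSum (k + 3) - fibSum (k + 2)) :=
      mul_le_mul_of_nonneg_left (min_le_right _ _) hb
    have h₃ : M = a * M + b * M := by rw [← add_mul, hab, one_mul]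
    linarith
  · rw [Finset.mem_Ico] at hr
    rw [Set.uIcc_of_le (by linarith)] at hw
    exact shift_ne_int hk hr.1 (by omega) (by linarith [hw.1]) (by linarith [hw.2]) p

lemma shiftedSum_punctured {k : ℕ} (hk : 2 ≤ k) (w : ℝ) :
    shiftedSum (Nat.fib (k + 1) - 1) (fibDist k * w) =
      ∑ r ∈ (Finset.Ico 1 (Nat.fib (k + 1))).erase (Nat.fib k),
        logChord (r * gold + fibDist k * w) + logChord (gold ^ k * (1 + w)) := by
  have hf : 0 < Nat.fib k := Nat.fib_pos.mpr (by omega)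
  have hf' : Nat.fib k < Nat.fib (k + 1) := Nat.fib_lt_fib_succ hk
  rw [shiftedSum, Nat.sub_add_cancel (by omega),
    ← Finset.sum_erase_add _ _ (Finset.mem_Ico.mpr ⟨hf, hf'⟩)]
  congr 1
  obtain ⟨p, hp⟩ := exists_int_fib_mul_gold k
  rw [hp, ← logChord_fibDist_mul, add_assoc, logChord_int_add]
  congr 1
  ring

lemma shiftedSum_fib_succ (k : ℕ) (w : ℝ) :
    shiftedSum (Nat.fib (k + 1)) (fibDist k * w) =
      shiftedSum (Nat.fib (k + 1) - 1) (fibDist k * w) + logChord (gold ^ k * (w - gold)) := by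
  have hf : 0 < Nat.fib (k + 1) := Nat.fib_pos.mpr (by omega)
  obtain ⟨n, hn⟩ := Nat.exists_eq_succ_of_ne_zero hf.ne'
  obtain ⟨p, hp⟩ := exists_int_fib_mul_gold (k + 1)
  rw [hn] at hp ⊢
  rw [Nat.succ_sub_one, Nat.succ_eq_add_one, shiftedSum_succ]
  congr 1
  push_cast at hp
  rw [hp, ← logChord_fibDist_mul, add_assoc, logChord_int_add, fibDist_succ]
  congr 1
  ring

/-- The sum over the punctured block; the two factors nearest to zero are omitted. -/
noncomputable def puncturedSum (k : ℕ) (w : ℝ) : ℝ :=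
  ∑ r ∈ (Finset.Ico 1 (Nat.fib (k + 1))).erase (Nat.fib k), logChord (r * gold + fibDist k * w)

lemma puncturedSum_concave {k : ℕ} (hk : 2 ≤ k) {w₁ w₂ a b : ℝ}
    (h₁ : |w₁| < 1 + gold) (h₂ : |w₂| < 1 + gold)
    (ha : 0 ≤ a) (hb : 0 ≤ b) (hab : a + b = 1) :
    a * puncturedSum k w₁ + b * puncturedSum k w₂ ≤ puncturedSum k (a * w₁ + b * w₂) := by
  refine sum_logChord_concave _ (fun r hr w hw p => ?_) ha hb hab
  rw [Finset.mem_erase, Finset.mem_Ico] at hr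
  refine punctured_shift_ne_int (by omega) hr.2.1 hr.2.2 hr.1 ?_ p
  rw [abs_lt] at h₁ h₂ ⊢
  rw [Set.mem_uIcc] at hw
  rcases hw with hw | hw <;> constructor <;> linarith [hw.1, hw.2]

lemma puncturedSum_zero {k : ℕ} (hk : 2 ≤ k) :
    puncturedSum k 0 = fibSum (k + 1) - logChord (gold ^ k) := by
  have h := shiftedSum_punctured hk 0
  simp only [mul_zero, add_zero, mul_one] at h
  simp only [puncturedSum, fibSum, h, mul_zero, add_zero]
  ring

lemma puncturedSum_gold {k : ℕ} (hk : 2 ≤ k) :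
    puncturedSum k gold = fibSum (k + 1) - logChord (gold ^ k * (1 + gold)) := by
  have h := shiftedSum_punctured hk gold
  have hf : 0 < Nat.fib (k + 1) := Nat.fib_pos.mpr (by omega)
  rw [show fibDist k * gold = -fibDist (k + 1) by rw [fibDist_succ]; ring,
    shiftedSum_reflect_fib (l := 0) (by omega), shiftedSum_zero] at h
  rw [puncturedSum, show fibDist k * gold = -fibDist (k + 1) by rw [fibDist_succ]; ring]
  linarith

lemma puncturedSum_gold_cube {k : ℕ} (hk : 2 ≤ k) :
    puncturedSum k (gold ^ 3) = fibSum (k + 3) - fibSum (k + 2) -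
      logChord (gold ^ k * gold ^ 2) - logChord (gold ^ k * (2 * gold)) := by
  have h := shiftedSum_punctured hk (gold ^ 3)
  have h' := shiftedSum_fib_succ k (gold ^ 3)
  rw [shiftedSum_upper_endpoint, show gold ^ k * (gold ^ 3 - gold) = -(gold ^ k * gold ^ 2) by
    linear_combination gold ^ k * (gold_cube + gold_sq), logChord_neg] at h'
  rw [show 1 + gold ^ 3 = 2 * gold by linear_combination gold_cube] at h
  rw [puncturedSum]
  linarith

lemma puncturedSum_neg_gold_sq {k : ℕ} (hk : 2 ≤ k) :
    puncturedSum k (-gold ^ 2) = fibSum (k + 2) - fibSum k -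
      logChord (gold ^ k) - logChord (gold ^ k * gold) := by
  have h := shiftedSum_punctured hk (-gold ^ 2)
  have h' := shiftedSum_fib_succ k (-gold ^ 2)
  rw [shiftedSum_lower_endpoint (by omega), show gold ^ k * (-gold ^ 2 - gold) = -gold ^ k by
    linear_combination -gold ^ k * gold_sq, logChord_neg] at h'
  rw [show 1 + -gold ^ 2 = gold by linear_combination -gold_sq] at h
  rw [puncturedSum]
  linarith

lemma fibSum_lower_recurrence {k : ℕ} (hk : 2 ≤ k) :
    fibSum (k + 1) + logChord (gold ^ k * gold ^ 2) + logChord (gold ^ k * (2 * gold)) -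
      gold ^ 2 * logChord (gold ^ k * (1 + gold)) - gold * logChord (gold ^ k) ≤
      fibSum (k + 3) - fibSum (k + 2) := by
  have hg := gold_pos
  have key := puncturedSum_concave hk (w₁ := gold) (w₂ := 0) (a := gold ^ 2) (b := gold)
    (by rw [abs_of_pos hg]; linarith) (by rw [abs_zero]; linarith) (by positivity) hg.le
    (by linear_combination gold_sq)
  rw [show gold ^ 2 * gold + gold * 0 = gold ^ 3 by ring, puncturedSum_gold hk,
    puncturedSum_zero hk, puncturedSum_gold_cube hk] at key
  have e : gold ^ 2 * fibSum (k + 1) + gold * fibSum (k + 1) = fibSum (k + 1) := by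
    linear_combination fibSum (k + 1) * gold_sq
  linarith

lemma fibSum_upper_recurrence {k : ℕ} (hk : 2 ≤ k) :
    gold * fibSum (k + 2) ≤ gold * (fibSum (k + 1) + fibSum k) +
      gold * logChord (gold ^ k * gold) + gold ^ 2 * logChord (gold ^ k * (1 + gold)) -
      gold ^ 2 * logChord (gold ^ k) := by
  have hg := gold_pos
  have key := puncturedSum_concave hk (w₁ := gold) (w₂ := -gold ^ 2) (a := gold ^ 2) (b := gold)
    (by rw [abs_of_pos hg]; linarith)
    (by rw [abs_neg, abs_of_pos (by positivity)]; linarith [gold_sq]) (by positivity) hg.le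
    (by linear_combination gold_sq)
  rw [show gold ^ 2 * gold + gold * -gold ^ 2 = 0 by ring, puncturedSum_gold hk,
    puncturedSum_zero hk, puncturedSum_neg_gold_sq hk] at key
  have e : ∀ x : ℝ, gold ^ 2 * x + gold * x = x := fun x => by
    linear_combination x * gold_sq
  have e₁ := e (fibSum (k + 1))
  have e₂ := e (logChord (gold ^ k))
  linarith

lemma min_le_sin_pi_mul {x : ℝ} (hx : 0 < x) (hx' : x < 1) :
    4 * min x (1 - x) ≤ 2 * Real.sin (Real.pi * x) := by
  have hpi := Real.pi_pos
  have key : ∀ z : ℝ, 0 < z → z ≤ 1 / 2 → 4 * z ≤ 2 * Real.sin (Real.pi * z) := by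
    intro z hz hz'
    have := Real.mul_le_sin (x := Real.pi * z) (by positivity) (by nlinarith)
    rw [show 2 / Real.pi * (Real.pi * z) = 2 * z by field_simp] at this
    linarith
  rcases le_total x (1 / 2) with h | h
  · exact (mul_le_mul_of_nonneg_left (min_le_left _ _) (by norm_num)).trans (key x hx h)
  · have := key (1 - x) (by linarith) (by linarith)
    rw [show Real.pi * (1 - x) = Real.pi - Real.pi * x by ring, Real.sin_pi_sub] at this
    exact (mul_le_mul_of_nonneg_left (min_le_right _ _) (by norm_num)).trans this

lemma abs_log_sub_log_le {a b c : ℝ} (hc : 0 < c) (ha : c ≤ a) (hb : c ≤ b) :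
    |Real.log a - Real.log b| ≤ |a - b| / c := by
  have key : ∀ a b : ℝ, c ≤ a → c ≤ b → Real.log a - Real.log b ≤ |a - b| / c := by
    intro a b ha hb
    have hb0 : 0 < b := hc.trans_le hb
    have ha0 : 0 < a := hc.trans_le ha
    rw [← Real.log_div ha0.ne' hb0.ne']
    calc Real.log (a / b) ≤ a / b - 1 := Real.log_le_sub_one_of_pos (by positivity)
      _ = (a - b) / b := by field_simp
      _ ≤ |a - b| / b := by gcongr; exact le_abs_self _
      _ ≤ |a - b| / c := by gcongr
  rw [abs_le]
  constructor
  · have := key b a hb ha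
    rw [abs_sub_comm] at this
    linarith
  · exact key a b ha hb

lemma abs_logChord_add_sub_le {σ y : ℝ} (hσ : 0 < σ) (hσ' : σ < 1) (hy : |y| ≤ σ / 2)
    (hy' : |y| ≤ (1 - σ) / 2) :
    |logChord (σ + y) - logChord σ| ≤ Real.pi * |y| * (1 / σ + 1 / (1 - σ)) := by
  obtain ⟨h1, h2⟩ := abs_le.mp hy
  obtain ⟨h3, h4⟩ := abs_le.mp hy'
  have hpi := Real.pi_pos
  set μ := min σ (1 - σ) with hμ
  have hμ0 : 0 < μ := lt_min hσ (by linarith)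
  have c1 : 2 * μ ≤ 2 * Real.sin (Real.pi * σ) := by
    linarith [min_le_sin_pi_mul hσ hσ']
  have c2 : 2 * μ ≤ 2 * Real.sin (Real.pi * (σ + y)) := by
    have := min_le_sin_pi_mul (x := σ + y) (by linarith) (by linarith)
    have h : μ / 2 ≤ min (σ + y) (1 - (σ + y)) :=
      le_min (by linarith [min_le_left σ (1 - σ)]) (by linarith [min_le_right σ (1 - σ)])
    linarith
  have hsin : |2 * Real.sin (Real.pi * (σ + y)) - 2 * Real.sin (Real.pi * σ)| ≤
      2 * Real.pi * |y| := by
    have := Real.abs_sin_sub_sin_le (Real.pi * (σ + y)) (Real.pi * σ)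
    rw [show Real.pi * (σ + y) - Real.pi * σ = Real.pi * y by ring, abs_mul,
      abs_of_pos hpi] at this
    rw [← mul_sub, abs_mul, abs_two]
    linarith
  have hinv : 1 / μ ≤ 1 / σ + 1 / (1 - σ) := by
    have i1 : 0 < 1 / σ := by positivity
    have i2 : 0 < 1 / (1 - σ) := one_div_pos.mpr (by linarith)
    rcases min_choice σ (1 - σ) with h | h <;> rw [hμ, h] <;> linarith
  unfold logChord
  rw [abs_of_pos (by linarith : 0 < 2 * Real.sin (Real.pi * (σ + y))),
    abs_of_pos (by linarith : 0 < 2 * Real.sin (Real.pi * σ))]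
  calc _ ≤ |2 * Real.sin (Real.pi * (σ + y)) - 2 * Real.sin (Real.pi * σ)| / (2 * μ) :=
        abs_log_sub_log_le (by linarith) c2 c1
    _ ≤ 2 * Real.pi * |y| / (2 * μ) := by gcongr
    _ = Real.pi * |y| * (1 / μ) := by field_simp
    _ ≤ _ := by gcongr

lemma sum_logChord_rational {p q : ℕ} (hq : 0 < q) (hpq : p.Coprime q) :
    ∑ r ∈ Finset.Ico 1 q, logChord (r * p / q) = Real.log q := by
  obtain ⟨n, rfl⟩ := Nat.exists_eq_succ_of_ne_zero hq.ne'
  have hprim := Complex.isPrimitiveRoot_exp_of_coprime p (n + 1) (by omega) hpq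
  have hprod := congrArg (fun z : ℂ => Real.log ‖z‖) hprim.prod_one_sub_pow_eq_order
  simp only [norm_prod] at hprod
  have hterm : ∀ j : ℕ, ‖1 - Complex.exp (2 * Real.pi * Complex.I * (p / (n + 1 : ℕ))) ^ (j + 1)‖ =
      |2 * Real.sin (Real.pi * ((j + 1 : ℕ) * p / (n + 1 : ℕ)))| := by
    intro j
    rw [← Complex.exp_nat_mul, norm_sub_rev,
      show ((j + 1 : ℕ) : ℂ) * (2 * Real.pi * Complex.I * (p / (n + 1 : ℕ))) =
        Complex.I * ((2 * (Real.pi * ((j + 1 : ℕ) * p / (n + 1 : ℕ))) : ℝ) : ℂ) by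
        push_cast; ring,
      Complex.norm_exp_I_mul_ofReal_sub_one, mul_div_cancel_left₀ _ two_ne_zero, Real.norm_eq_abs]
  have hne : ∀ j ∈ Finset.range n,
      ‖1 - Complex.exp (2 * Real.pi * Complex.I * (p / (n + 1 : ℕ))) ^ (j + 1)‖ ≠ 0 := by
    intro j hj
    rw [norm_ne_zero_iff, sub_ne_zero]
    exact (hprim.pow_ne_one_of_pos_of_lt (by omega) (by simpa using hj)).symm
  rw [Real.log_prod hne] at hprod
  simp only [hterm] at hprod
  rw [Nat.succ_eq_add_one, Finset.sum_Ico_eq_sum_range]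
  simp only [logChord, Nat.add_sub_cancel, add_comm 1]
  rw [hprod]
  congr 1
  exact_mod_cast Complex.norm_natCast (n + 1)

lemma fib_mul_gold_pow_le (k : ℕ) : (Nat.fib (k + 2) : ℝ) * gold ^ (k + 2) ≤ 1 / 2 := by
  have hg := gold_pos
  induction k using Nat.twoStepInduction with
  | zero => norm_num; linarith [gold_sq, gold_lower]
  | one => norm_num [Nat.fib_add_two]; linarith [gold_cube, gold_upper]
  | more k h1 h2 =>
    have h3 : (Nat.fib (k + 2 + 2) : ℝ) = Nat.fib (k + 2) + Nat.fib (k + 1 + 2) := by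
      exact_mod_cast Nat.fib_add_two
    calc (Nat.fib (k + 2 + 2) : ℝ) * gold ^ (k + 2 + 2)
        = gold ^ 2 * (Nat.fib (k + 2) * gold ^ (k + 2)) +
          gold * (Nat.fib (k + 1 + 2) * gold ^ (k + 1 + 2)) := by rw [h3]; ring
      _ ≤ gold ^ 2 * (1 / 2) + gold * (1 / 2) := by gcongr
      _ = 1 / 2 := by linear_combination gold_sq / 2

lemma sum_reciprocal_mod_le {p q : ℕ} (hpq : p.Coprime q) :
    ∑ r ∈ Finset.Ico 1 q,
      (1 / ((r * p % q : ℕ) / q : ℝ) + 1 / (1 - (r * p % q : ℕ) / q)) ≤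
      2 * q * (1 + Real.log q) := by
  rcases Nat.eq_zero_or_pos q with rfl | hq
  · simp
  have hq' : (0 : ℝ) < q := by exact_mod_cast hq
  set f : ℕ → ℝ := fun s => 1 / ((s : ℝ) / q) + 1 / (1 - (s : ℝ) / q) with hf
  have hinj : Set.InjOn (fun r => r * p % q) (Finset.Ico 1 q : Set ℕ) := by
    intro a ha b hb hab
    simp only [Finset.coe_Ico, Set.mem_Ico] at ha hb
    have : a ≡ b [MOD q] := Nat.ModEq.cancel_right_of_coprime (c := p)
      (by rwa [Nat.gcd_comm]) hab
    exact this.eq_of_lt_of_lt ha.2 hb.2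
  have himg : (Finset.Ico 1 q).image (fun r => r * p % q) ⊆ Finset.Ico 1 q := by
    intro s hs
    rw [Finset.mem_image] at hs
    obtain ⟨r, hr, rfl⟩ := hs
    rw [Finset.mem_Ico] at hr ⊢
    refine ⟨Nat.one_le_iff_ne_zero.mpr fun h => ?_, Nat.mod_lt _ hq⟩
    have := hpq.symm.dvd_of_dvd_mul_right (Nat.dvd_of_mod_eq_zero h)
    exact absurd (Nat.le_of_dvd hr.1 this) (by omega)
  have hharm : ∑ s ∈ Finset.Ico 1 q, (1 / (s : ℝ)) ≤ 1 + Real.log q := by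
    refine le_trans ?_ (harmonic_le_one_add_log q)
    rw [harmonic_eq_sum_Icc]
    push_cast
    simp only [one_div]
    exact Finset.sum_le_sum_of_subset_of_nonneg Finset.Ico_subset_Icc_self
      fun _ _ _ => by positivity
  have hrefl : ∑ s ∈ Finset.Ico 1 q, (1 / ((q - s : ℕ) : ℝ)) =
      ∑ s ∈ Finset.Ico 1 q, (1 / (s : ℝ)) := by
    have := Finset.sum_Ico_reflect (fun s : ℕ => 1 / (s : ℝ)) 1 (m := q) (n := q) (by omega)
    rw [this]
    congr 2
    omega
  calc ∑ r ∈ Finset.Ico 1 q, f (r * p % q)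
      = ∑ s ∈ (Finset.Ico 1 q).image (fun r => r * p % q), f s := (Finset.sum_image hinj).symm
    _ ≤ ∑ s ∈ Finset.Ico 1 q, f s := by
        refine Finset.sum_le_sum_of_subset_of_nonneg himg fun s hs _ => ?_
        rw [Finset.mem_Ico] at hs
        have : (s : ℝ) / q < 1 := by
          rw [div_lt_one hq']
          exact_mod_cast hs.2
        exact add_nonneg (by positivity) (one_div_nonneg.mpr (by linarith))
    _ = ∑ s ∈ Finset.Ico 1 q, (q * (1 / (s : ℝ)) + q * (1 / ((q - s : ℕ) : ℝ))) := by
        refine Finset.sum_congr rfl fun s hs => ?_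
        rw [Finset.mem_Ico] at hs
        have h1 : (s : ℝ) ≠ 0 := by
          have : s ≠ 0 := by omega
          exact_mod_cast this
        have h2 : (q : ℝ) - s ≠ 0 := sub_ne_zero.mpr (by exact_mod_cast hs.2.ne')
        rw [Nat.cast_sub hs.2.le, hf]
        field_simp
    _ = 2 * q * ∑ s ∈ Finset.Ico 1 q, (1 / (s : ℝ)) := by
        rw [Finset.sum_add_distrib, ← Finset.mul_sum, ← Finset.mul_sum, hrefl]
        ring
    _ ≤ _ := by gcongr

lemma abs_fibSum_sub_log_le (k : ℕ) :
    |fibSum (k + 2) - Real.log (Nat.fib (k + 2))| ≤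
      Real.pi * (1 + Real.log (Nat.fib (k + 2))) := by
  have hpi := Real.pi_pos
  set q := Nat.fib (k + 2) with hq
  set p := Nat.fib (k + 1) with hp
  have hq0 : 0 < q := Nat.fib_pos.mpr (by omega)
  have hq' : (0 : ℝ) < q := by exact_mod_cast hq0
  have hpq : p.Coprime q := Nat.fib_coprime_fib_succ (k + 1)
  have hsmall : (q : ℝ) * gold ^ (k + 2) ≤ 1 / 2 := fib_mul_gold_pow_le k
  have hterm : ∀ r ∈ Finset.Ico 1 q,
      |logChord (r * gold + 0) - logChord (r * p / q)| ≤ Real.pi * gold ^ (k + 2) *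
        (1 / ((r * p % q : ℕ) / q : ℝ) + 1 / (1 - (r * p % q : ℕ) / q)) := by
    intro r hr
    rw [Finset.mem_Ico] at hr
    set s := r * p % q with hs
    have hs0 : 1 ≤ s := by
      refine Nat.one_le_iff_ne_zero.mpr fun h => ?_
      have := hpq.symm.dvd_of_dvd_mul_right (Nat.dvd_of_mod_eq_zero h)
      exact absurd (Nat.le_of_dvd hr.1 this) (by omega)
    have hsq : s + 1 ≤ q := Nat.mod_lt _ hq0
    have hs0' : (1 : ℝ) ≤ s := by exact_mod_cast hs0
    have hsq' : (s : ℝ) + 1 ≤ q := by exact_mod_cast hsq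
    have hdm : (q : ℝ) * (r * p / q : ℕ) + s = r * p := by
      exact_mod_cast Nat.div_add_mod (r * p) q
    have e1 : (r : ℝ) * p / q = ((r * p / q : ℕ) : ℤ) + (s : ℝ) / q := by
      rw [← hdm, Int.cast_natCast]
      field_simp
    have e2 : (r : ℝ) * gold + 0 =
        ((r * p / q : ℕ) : ℤ) + ((s : ℝ) / q + r / q * fibDist (k + 2)) := by
      have := fib_succ_mul_gold (k + 1)
      rw [← hp, show Nat.fib (k + 1 + 1) = q from rfl] at this
      rw [← add_assoc, ← e1]
      field_simp
      linear_combination r * this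
    have hy : |(r : ℝ) / q * fibDist (k + 2)| ≤ gold ^ (k + 2) := by
      rw [abs_mul, abs_fibDist, abs_of_nonneg (by positivity)]
      refine mul_le_of_le_one_left (pow_nonneg gold_pos.le _) ?_
      rw [div_le_one hq']
      exact_mod_cast hr.2.le
    have hgq : gold ^ (k + 2) ≤ 1 / q / 2 := by
      rw [div_div, le_div_iff₀ (by positivity)]
      linarith
    have hσ : 1 / (q : ℝ) ≤ s / q := by gcongr
    have hσ' : 1 / (q : ℝ) ≤ 1 - s / q := by
      rw [le_sub_iff_add_le, ← add_div, div_le_one hq']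
      linarith
    have hq1 : 0 < 1 / (q : ℝ) := by positivity
    rw [e1, e2, logChord_int_add, logChord_int_add]
    refine (abs_logChord_add_sub_le (by linarith) (by linarith) (by linarith)
      (by linarith)).trans ?_
    have i1 : 0 ≤ 1 / ((s : ℝ) / q) := by positivity
    have i2 : 0 ≤ 1 / (1 - (s : ℝ) / q) := one_div_nonneg.mpr (by linarith)
    gcongr
  rw [← sum_logChord_rational hq0 hpq, fibSum, shiftedSum, Nat.sub_add_cancel hq0,
    ← Finset.sum_sub_distrib]
  refine (Finset.abs_sum_le_sum_abs _ _).trans ((Finset.sum_le_sum hterm).trans ?_)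
  rw [← Finset.mul_sum, sum_logChord_rational hq0 hpq]
  have hlog : 0 ≤ Real.log q := Real.log_natCast_nonneg q
  have hg : 0 ≤ gold ^ (k + 2) := pow_nonneg gold_pos.le _
  calc _ ≤ Real.pi * gold ^ (k + 2) * (2 * q * (1 + Real.log q)) := by
        gcongr
        exact sum_reciprocal_mod_le hpq
    _ = Real.pi * (2 * (q * gold ^ (k + 2))) * (1 + Real.log q) := by ring
    _ ≤ Real.pi * 1 * (1 + Real.log q) := by gcongr; linarith
    _ = _ := by ring

lemma log_fib_le (k : ℕ) : Real.log (Nat.fib (k + 2)) ≤ k + 2 := by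
  have h : Nat.fib (k + 2) ≤ 2 ^ (k + 2) := by
    induction k using Nat.twoStepInduction with
    | zero => norm_num
    | one => norm_num [Nat.fib_add_two]
    | more k h1 h2 =>
      rw [Nat.fib_add_two]
      calc _ ≤ 2 ^ (k + 2) + 2 ^ (k + 1 + 2) := add_le_add h1 h2
        _ ≤ _ := by ring_nf; omega
  have hpos : (0 : ℝ) < Nat.fib (k + 2) := by exact_mod_cast Nat.fib_pos.mpr (by omega)
  calc Real.log (Nat.fib (k + 2)) ≤ Real.log (2 ^ (k + 2)) :=
        Real.log_le_log hpos (by exact_mod_cast h)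
    _ = (k + 2) * Real.log 2 := by rw [Real.log_pow]; push_cast; ring
    _ ≤ (k + 2) * 1 := by gcongr; linarith [Real.log_two_lt_d9]
    _ = _ := mul_one _

lemma abs_fibSum_le (k : ℕ) : |fibSum (k + 2)| ≤ 6 * ((k + 2 : ℕ) + 1) := by
  have h1 := abs_fibSum_sub_log_le k
  have h2 := log_fib_le k
  have h3 : 0 ≤ Real.log (Nat.fib (k + 2)) := Real.log_natCast_nonneg _
  have h4 : |fibSum (k + 2)| ≤ |fibSum (k + 2) - Real.log (Nat.fib (k + 2))| +
      |Real.log (Nat.fib (k + 2))| := by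
    simpa using abs_add_le (fibSum (k + 2) - Real.log (Nat.fib (k + 2)))
      (Real.log (Nat.fib (k + 2)))
  rw [abs_of_nonneg h3] at h4
  have h5 := Real.pi_lt_four
  push_cast
  nlinarith

lemma tendsto_gold_pow_mul (x : ℝ) : Tendsto (fun k : ℕ => gold ^ k * x) atTop (nhds 0) := by
  have := (tendsto_pow_atTop_nhds_zero_of_lt_one gold_pos.le
    (by linarith [gold_upper] : gold < 1)).mul_const x
  simpa using this

lemma tendsto_logChord_gold_pow {x : ℝ} (hx : 0 < x) :
    Tendsto (fun k : ℕ => logChord (gold ^ k * x) - k * Real.log gold) atTop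
      (nhds (Real.log (2 * Real.pi) + Real.log x)) := by
  have hpi := Real.pi_pos
  have hsinc : Tendsto (fun k : ℕ => Real.sinc (Real.pi * (gold ^ k * x))) atTop (nhds 1) := by
    have := Real.continuous_sinc.tendsto 0
    rw [Real.sinc_zero] at this
    refine this.comp ?_
    simpa using (tendsto_gold_pow_mul x).const_mul Real.pi
  have hlog : Tendsto (fun k : ℕ => Real.log (2 * Real.pi) + Real.log x +
      Real.log (Real.sinc (Real.pi * (gold ^ k * x)))) atTop
      (nhds (Real.log (2 * Real.pi) + Real.log x)) := by
    simpa using ((Real.continuousAt_log one_ne_zero).tendsto.comp hsinc).const_add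
      (Real.log (2 * Real.pi) + Real.log x)
  refine hlog.congr' ?_
  filter_upwards [hsinc.eventually_const_lt one_pos] with k hk
  have hg : 0 < gold ^ k := pow_pos gold_pos k
  have hne : Real.pi * (gold ^ k * x) ≠ 0 := by positivity
  have e : 2 * Real.sin (Real.pi * (gold ^ k * x)) =
      2 * Real.pi * (gold ^ k * x) * Real.sinc (Real.pi * (gold ^ k * x)) := by
    rw [Real.sinc_of_ne_zero hne]
    field_simp
  rw [logChord, Real.log_abs, e, Real.log_mul (by positivity) hk.ne',
    Real.log_mul (by positivity : 2 * Real.pi ≠ 0) (by positivity), Real.log_mul hg.ne' hx.ne',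
    Real.log_pow]
  ring

lemma superadditive_bound {x : ℕ → ℝ} {a : ℝ} (h : ∀ k, x (k + 1) + x k + a ≤ x (k + 2))
    (hx : Tendsto (fun k => gold ^ k * x k) atTop (nhds 0)) (k : ℕ) :
    x (k + 1) + gold * x k ≤ -((1 + gold) * a) := by
  have hg := gold_pos
  set u : ℕ → ℝ := fun k => x (k + 1) + gold * x k + (1 + gold) * a with hu
  have hstep : ∀ k, u k ≤ gold * u (k + 1) := fun k => by
    have := mul_le_mul_of_nonneg_left (h k) hg.le
    simp only [hu]
    linear_combination this - (x (k + 1) + a) * gold_sq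
  have hmono : Monotone fun k => gold ^ k * u k := monotone_nat_of_le_succ fun k => by
    rw [pow_succ, mul_assoc]
    exact mul_le_mul_of_nonneg_left (hstep k) (pow_nonneg hg.le k)
  have hlim : Tendsto (fun k => gold ^ k * u k) atTop (nhds 0) := by
    have h1 := ((hx.comp (tendsto_add_atTop_nat 1)).const_mul gold⁻¹).add (hx.const_mul gold)
    have h2 := h1.add (tendsto_gold_pow_mul ((1 + gold) * a))
    simp only [mul_zero, add_zero] at h2
    refine h2.congr fun k => ?_
    simp only [hu, Function.comp, pow_succ]
    field_simp
  have := hmono.ge_of_tendsto hlim k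
  have hk : u k ≤ 0 := by
    by_contra! hpos
    exact absurd this (not_le.mpr (mul_pos (pow_pos hg k) hpos))
  simp only [hu] at hk
  linarith

lemma subadditive_bound {x : ℕ → ℝ} {b : ℝ} (h : ∀ k, x (k + 2) ≤ x (k + 1) + x k + b)
    (hx : Tendsto (fun k => gold ^ k * x k) atTop (nhds 0)) (k : ℕ) :
    -((1 + gold) * b) ≤ x (k + 1) + gold * x k := by
  have := superadditive_bound (x := fun k => -x k) (a := -b) (fun k => by linarith [h k])
    (by simpa using hx.neg) k
  linarith

lemma bounded_of_almost_additive {x : ℕ → ℝ} {a b : ℝ}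
    (ha : ∀ k, x (k + 1) + x k + a ≤ x (k + 2)) (hb : ∀ k, x (k + 2) ≤ x (k + 1) + x k + b)
    (hx : Tendsto (fun k => gold ^ k * x k) atTop (nhds 0)) :
    ∃ B, ∀ k, |x k| ≤ B := by
  have hg := gold_pos
  have hg' := gold_upper
  set M := max |(1 + gold) * a| |(1 + gold) * b| with hM
  have hM0 : 0 ≤ M := (abs_nonneg _).trans (le_max_left _ _)
  refine ⟨|x 0| + 3 * M, fun k => ?_⟩
  induction k with
  | zero => linarith
  | succ k ih =>
    have h1 := superadditive_bound ha hx k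
    have h2 := subadditive_bound hb hx k
    have h3 : |x (k + 1) + gold * x k| ≤ M := by
      rw [abs_le]
      constructor
      · linarith [le_abs_self ((1 + gold) * b), le_max_right |(1 + gold) * a| |(1 + gold) * b|]
      · linarith [neg_abs_le ((1 + gold) * a), le_max_left |(1 + gold) * a| |(1 + gold) * b|]
    have h4 : |x (k + 1)| ≤ |x (k + 1) + gold * x k| + gold * |x k| := by
      have := abs_sub (x (k + 1) + gold * x k) (gold * x k)
      rwa [add_sub_cancel_right, abs_mul gold, abs_of_pos hg] at this
    have h5 : gold * |x k| ≤ gold * (|x 0| + 3 * M) := by gcongr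
    nlinarith [abs_nonneg (x 0)]

lemma eventually_ge_of_almost_additive {x : ℕ → ℝ} {a b η : ℝ} (hη : 0 < η)
    (ha : ∀ k, x (k + 1) + x k + a ≤ x (k + 2)) (hb : ∀ k, x (k + 2) ≤ x (k + 1) + x k + b)
    (hx : Tendsto (fun k => gold ^ k * x k) atTop (nhds 0)) :
    ∀ᶠ k in atTop, gold * a - (1 + gold) * b - η ≤ x k := by
  have hg := gold_pos
  set m := gold * a - (1 + gold) * b with hm
  have hstep : ∀ k, gold ^ 2 * (x k - m) ≤ x (k + 2) - m := fun k => by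
    have h1 := mul_le_mul_of_nonneg_left (ha k) hg.le
    have h2 := subadditive_bound hb hx (k + 1)
    have h3 : (1 + gold) * (gold ^ 2 * (x k - m)) ≤ (1 + gold) * (x (k + 2) - m) := by
      rw [show (1 + gold) * (gold ^ 2 * (x k - m)) = gold * (x k - m) by
        linear_combination gold * (x k - m) * gold_sq]
      simp only [hm]
      linear_combination h1 + h2
    exact le_of_mul_le_mul_left h3 (by linarith)
  set c := min (x 0 - m) ((x 1 - m) / gold) with hc
  have hlow : ∀ k, gold ^ k * c ≤ x k - m := fun k => by
    induction k using Nat.twoStepInduction with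
    | zero =>
      rw [pow_zero, one_mul]
      exact min_le_left _ _
    | one =>
      rw [pow_one, mul_comm, ← le_div_iff₀ hg]
      exact min_le_right _ _
    | more k ih _ =>
      refine le_trans ?_ (hstep k)
      rw [pow_add, mul_comm (gold ^ k), mul_assoc]
      gcongr
  filter_upwards [(tendsto_gold_pow_mul c).eventually_const_lt (neg_lt_zero.mpr hη)] with k hk
  linarith [hlow k]

lemma log_gold_gap : 0 < (1 + gold) * Real.log 2 + (1 + 2 * gold) * Real.log gold := by
  have hg := gold_pos
  have hl := gold_lower
  have hu := gold_upper
  have h1 : -5 * Real.log 2 < 7 * Real.log gold := by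
    have : Real.log ((2 : ℝ) ^ 5)⁻¹ < Real.log (gold ^ 7) := by
      refine Real.log_lt_log (by norm_num) ?_
      calc ((2 : ℝ) ^ 5)⁻¹ < 0.618 ^ 7 := by norm_num
        _ < gold ^ 7 := by gcongr
    rw [Real.log_inv, Real.log_pow, Real.log_pow] at this
    push_cast at this
    linarith
  have h2 := Real.log_pos one_lt_two
  nlinarith

/-- The quantity `fibSum k`, corrected by its linear growth. -/
noncomputable def normSum (k : ℕ) : ℝ := fibSum k + k * Real.log gold

lemma tendsto_gold_pow_mul_normSum :
    Tendsto (fun k => gold ^ k * normSum k) atTop (nhds 0) := by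
  have hg := gold_pos
  set c := 6 + |Real.log gold| with hc
  have hlim : Tendsto (fun k : ℕ => c * (k ^ 1 * gold ^ k) + gold ^ k * c) atTop (nhds 0) := by
    simpa using ((tendsto_pow_const_mul_const_pow_of_abs_lt_one 1
      (by rw [abs_of_pos hg]; linarith [gold_upper] : |gold| < 1)).const_mul c).add
      (tendsto_gold_pow_mul c)
  refine squeeze_zero_norm' ?_ hlim
  filter_upwards [eventually_ge_atTop 2] with k hk
  obtain ⟨j, rfl⟩ := Nat.exists_eq_add_of_le' hk
  have h1 := abs_fibSum_le j
  have h2 : |normSum (j + 2)| ≤ c * ((j + 2 : ℕ) + 1) := by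
    refine (abs_add_le _ _).trans ?_
    rw [abs_mul, Nat.abs_cast]
    simp only [hc]
    nlinarith [abs_nonneg (Real.log gold)]
  rw [Real.norm_eq_abs, abs_mul, abs_of_pos (pow_pos hg _)]
  calc _ ≤ gold ^ (j + 2) * (c * ((j + 2 : ℕ) + 1)) := by gcongr
    _ = _ := by ring

/-- The constant in the superadditive recurrence for `normSum`. -/
noncomputable def lowerConst : ℝ :=
  Real.log (2 * Real.pi) + Real.log 2 + (4 - gold) * Real.log gold

/-- The constant in the subadditive recurrence for `normSum`. -/
noncomputable def upperConst : ℝ :=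
  Real.log (2 * Real.pi) + (2 - gold) * Real.log gold

lemma log_one_add_gold : Real.log (1 + gold) = -Real.log gold := by
  rw [← Real.log_inv]
  congr 1
  refine eq_inv_of_mul_eq_one_left ?_
  linear_combination gold_sq

lemma eventually_normSum_superadditive {ε : ℝ} (hε : 0 < ε) :
    ∀ᶠ k in atTop, normSum (k + 1) + normSum k + (lowerConst - ε) ≤ normSum (k + 2) := by
  have hg := gold_pos
  have hlim := (((tendsto_logChord_gold_pow (x := gold ^ 2) (by positivity)).add
    (tendsto_logChord_gold_pow (x := 2 * gold) (by positivity))).sub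
    ((tendsto_logChord_gold_pow (x := 1 + gold) (by positivity)).const_mul (gold ^ 2))).sub
    ((tendsto_logChord_gold_pow (x := 1) one_pos).const_mul gold)
  have hconst : Real.log (2 * Real.pi) + Real.log (gold ^ 2) +
      (Real.log (2 * Real.pi) + Real.log (2 * gold)) -
      gold ^ 2 * (Real.log (2 * Real.pi) + Real.log (1 + gold)) -
      gold * (Real.log (2 * Real.pi) + Real.log 1) = lowerConst := by
    rw [Real.log_pow, Real.log_mul two_ne_zero hg.ne', log_one_add_gold, Real.log_one, lowerConst]
    push_cast
    linear_combination (Real.log gold - Real.log (2 * Real.pi)) * gold_sq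
  rw [hconst] at hlim
  obtain ⟨N, hN⟩ := eventually_atTop.1 (hlim.eventually_const_lt (sub_lt_self lowerConst hε))
  refine eventually_atTop.2 ⟨N + 3, fun k hk => ?_⟩
  obtain ⟨j, rfl⟩ : ∃ j, k = j + 1 := ⟨k - 1, by omega⟩
  have h1 := hN j (by omega)
  have h2 := fibSum_lower_recurrence (k := j) (by omega)
  rw [mul_one] at h1
  simp only [normSum, Nat.add_assoc, Nat.reduceAdd]
  push_cast
  have h3 : gold ^ 2 * (j * Real.log gold) = (1 - gold) * (j * Real.log gold) := by rw [gold_sq]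
  linarith

lemma eventually_normSum_subadditive {ε : ℝ} (hε : 0 < ε) :
    ∀ᶠ k in atTop, normSum (k + 2) ≤ normSum (k + 1) + normSum k + (upperConst + ε) := by
  have hg := gold_pos
  have hlim := (((tendsto_logChord_gold_pow (x := gold) hg).const_mul gold).add
    ((tendsto_logChord_gold_pow (x := 1 + gold) (by positivity)).const_mul (gold ^ 2))).sub
    ((tendsto_logChord_gold_pow (x := 1) one_pos).const_mul (gold ^ 2))
  have hconst : gold * (Real.log (2 * Real.pi) + Real.log gold) +
      gold ^ 2 * (Real.log (2 * Real.pi) + Real.log (1 + gold)) -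
      gold ^ 2 * (Real.log (2 * Real.pi) + Real.log 1) =
      gold * (upperConst - Real.log gold) := by
    rw [log_one_add_gold, Real.log_one, upperConst]
    ring
  rw [hconst] at hlim
  have hlt : gold * (upperConst - Real.log gold) < gold * (upperConst - Real.log gold + ε) := by
    gcongr
    linarith
  filter_upwards [hlim.eventually_lt_const hlt, eventually_ge_atTop 2] with k h1 hk
  have h2 := fibSum_upper_recurrence hk
  rw [mul_one] at h1
  refine le_of_mul_le_mul_left ?_ hg
  simp only [normSum]
  push_cast
  linarith

lemma tendsto_gold_pow_mul_normSum_add (N : ℕ) :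
    Tendsto (fun k => gold ^ k * normSum (k + N)) atTop (nhds 0) := by
  have h := ((tendsto_add_atTop_iff_nat N).2 tendsto_gold_pow_mul_normSum).const_mul (gold ^ N)⁻¹
  rw [mul_zero] at h
  refine h.congr fun k => ?_
  have : gold ^ N ≠ 0 := pow_ne_zero _ gold_pos.ne'
  rw [pow_add]
  field_simp

lemma eventually_normSum_almost_additive {ε : ℝ} (hε : 0 < ε) :
    ∃ N : ℕ, ∀ k, normSum (k + 1 + N) + normSum (k + N) + (lowerConst - ε) ≤ normSum (k + 2 + N) ∧
      normSum (k + 2 + N) ≤ normSum (k + 1 + N) + normSum (k + N) + (upperConst + ε) := by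
  obtain ⟨N, hN⟩ := eventually_atTop.1
    ((eventually_normSum_superadditive hε).and (eventually_normSum_subadditive hε))
  refine ⟨N, fun k => ?_⟩
  rw [Nat.add_right_comm k 1, Nat.add_right_comm k 2]
  exact hN (k + N) (Nat.le_add_left _ _)

lemma exists_abs_normSum_le : ∃ B : ℝ, ∀ᶠ k in atTop, |normSum k| ≤ B := by
  obtain ⟨N, hN⟩ := eventually_normSum_almost_additive one_pos
  obtain ⟨B, hB⟩ := bounded_of_almost_additive (x := fun k => normSum (k + N))
    (fun k => (hN k).1) (fun k => (hN k).2) (tendsto_gold_pow_mul_normSum_add N)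
  refine ⟨B, eventually_atTop.2 ⟨N, fun k hk => ?_⟩⟩
  have := hB (k - N)
  rwa [Nat.sub_add_cancel hk] at this

lemma eventually_fibSum_le_succ : ∀ᶠ k in atTop, fibSum k ≤ fibSum (k + 1) := by
  have hg := gold_pos
  have hg' := gold_upper
  set μ := (1 + gold) * Real.log 2 + (1 + 2 * gold) * Real.log gold with hμ
  have hμ0 : 0 < μ := log_gold_gap
  obtain ⟨N, hN⟩ := eventually_normSum_almost_additive (ε := μ / 8) (by positivity)
  have hev := eventually_ge_of_almost_additive (x := fun k => normSum (k + N)) (half_pos hμ0)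
    (fun k => (hN k).1) (fun k => (hN k).2) (tendsto_gold_pow_mul_normSum_add N)
  obtain ⟨M, hM⟩ := eventually_atTop.1 hev
  refine eventually_atTop.2 ⟨M + N + 1, fun k hk => ?_⟩
  obtain ⟨j, rfl⟩ : ∃ j, k = j + 1 + N := ⟨k - N - 1, by omega⟩
  have h1 := hM j (by omega)
  have h2 := (hN j).1
  have h3 : normSum (j + 2 + N) = fibSum (j + 1 + N + 1) +
      ((j + 1 + N : ℕ) : ℝ) * Real.log gold + Real.log gold := by
    rw [normSum, show j + 2 + N = j + 1 + N + 1 by ring]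
    push_cast
    ring
  have h4 : normSum (j + 1 + N) = fibSum (j + 1 + N) + ((j + 1 + N : ℕ) : ℝ) * Real.log gold := rfl
  have hgap : gold * lowerConst - (1 + gold) * upperConst + lowerConst - Real.log gold = μ := by
    rw [lowerConst, upperConst, hμ]
    ring
  have h5 : gold * μ ≤ 0.6181 * μ := by gcongr
  nlinarith

/-- A nonnegative bound for how negative a Fibonacci block of a shifted sum can be. -/
noncomputable def defect (i : ℕ) : ℝ :=
  max 0 (-min (fibSum (i + 2) - fibSum i) (fibSum (i + 3) - fibSum (i + 2)))

lemma defect_nonneg (i : ℕ) : 0 ≤ defect i := le_max_left _ _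

lemma exists_sum_defect_le : ∃ C : ℝ, ∀ K : ℕ, ∑ i ∈ Finset.range K, defect i ≤ C := by
  obtain ⟨N, hN⟩ := eventually_atTop.1 eventually_fibSum_le_succ
  have hz : ∀ i ∉ Finset.range N, defect i = 0 := by
    intro i hi
    rw [Finset.mem_range, not_lt] at hi
    have h0 := hN i hi
    have h1 := hN (i + 1) (by omega)
    have h2 := hN (i + 2) (by omega)
    refine max_eq_left (neg_nonpos.2 (le_min ?_ ?_))
    · exact sub_nonneg.2 (h0.trans h1)
    · exact sub_nonneg.2 h2
  have hs : Summable defect := summable_of_ne_finset_zero hz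
  exact ⟨∑' i, defect i, fun K => hs.sum_le_tsum _ fun i _ => defect_nonneg i⟩

lemma neg_sum_defect_le_shiftedSum (K : ℕ) : ∀ m < Nat.fib (K + 1), ∀ t : ℝ, -gold ^ 2 ≤ t →
    t ≤ gold → -∑ i ∈ Finset.range K, defect i ≤ shiftedSum m (fibDist K * t) := by
  have hg := gold_pos
  have hsq := gold_sq
  have hcube := gold_cube
  induction K using Nat.twoStepInduction with
  | zero =>
    intro m hm t _ _
    obtain rfl : m = 0 := by simpa using hm
    simp [shiftedSum_zero]
  | one =>
    intro m hm t _ _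
    obtain rfl : m = 0 := by simpa using hm
    simpa [shiftedSum_zero] using defect_nonneg 0
  | more K ih0 ih1 =>
    intro m hm t ht ht'
    have htw : fibDist (K + 2) * t = fibDist (K + 1) * (-gold * t) := by
      rw [fibDist_succ (K + 1)]
      ring
    have hw : -gold ^ 2 ≤ -gold * t := by nlinarith
    have hw' : -gold * t ≤ gold ^ 3 := by nlinarith
    rcases lt_or_ge m (Nat.fib (K + 2)) with h | h
    · rw [htw, Finset.sum_range_succ]
      have := ih1 m h (-gold * t) hw (by nlinarith [gold_upper])
      linarith [defect_nonneg (K + 1)]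
    · obtain ⟨l, rfl⟩ := Nat.exists_eq_add_of_le h
      have hl : l < Nat.fib (K + 1) := by
        have : Nat.fib (K + 2 + 1) = Nat.fib (K + 1) + Nat.fib (K + 2) := Nat.fib_add_two
        omega
      obtain ⟨p, hp⟩ := exists_int_fib_mul_gold (K + 2)
      have hshift : (Nat.fib (K + 2) : ℝ) * gold + fibDist (K + 2) * t =
          p + fibDist K * (gold ^ 2 * (t + 1)) := by
        rw [hp, fibDist_add_two]
        ring
      rw [shiftedSum_add, hshift, shiftedSum_int_add, htw, Finset.sum_range_succ,
        Finset.sum_range_succ]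
      have hblock := min_le_shiftedSum_fib (k := K + 1) (by omega) hw hw'
      have hrest := ih0 l hl (gold ^ 2 * (t + 1)) (by nlinarith [gold_upper])
        (by nlinarith [gold_upper])
      have hdef : -min (fibSum (K + 1 + 2) - fibSum (K + 1))
        (fibSum (K + 1 + 3) - fibSum (K + 1 + 2)) ≤ defect (K + 1) := le_max_right _ _
      linarith [defect_nonneg K]

lemma half_le_fib_succ_mul_gold_pow (k : ℕ) : 1 / 2 ≤ (Nat.fib (k + 1) : ℝ) * gold ^ k := by
  have h1 := gold_lower
  have h2 := gold_upper
  induction k using Nat.twoStepInduction with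
  | zero => norm_num
  | one => norm_num; linarith
  | more k ih0 ih1 =>
    rw [Nat.fib_add_two (n := k + 1)]
    push_cast
    have : ((Nat.fib (k + 1) : ℝ) + Nat.fib (k + 1 + 1)) * gold ^ (k + 2) =
        gold ^ 2 * (Nat.fib (k + 1) * gold ^ k) +
          gold * (Nat.fib (k + 1 + 1) * gold ^ (k + 1)) := by ring
    rw [this]
    nlinarith [gold_sq, gold_pos]

lemma exists_shiftedSum_le : ∃ C : ℝ, ∀ᶠ n : ℕ in atTop, shiftedSum n 0 ≤ Real.log n + C := by
  have hg := gold_pos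
  obtain ⟨B, hB⟩ := exists_abs_normSum_le
  obtain ⟨N, hN⟩ := eventually_atTop.1 hB
  obtain ⟨C, hC⟩ := exists_sum_defect_le
  refine ⟨B + C + Real.log 2 - 2 * Real.log gold,
    eventually_atTop.2 ⟨Nat.fib N + 1, fun n hn => ?_⟩⟩
  set K := Nat.greatestFib n with hK
  have hNK : N ≤ K := Nat.le_greatestFib.2 (by omega)
  have hK1 : 1 ≤ K := Nat.le_greatestFib.2 (by simpa using by omega)
  have hfib : Nat.fib K ≤ n := Nat.fib_greatestFib_le n
  have hlt : n < Nat.fib (K + 1) := Nat.lt_fib_greatestFib_add_one n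
  set m := Nat.fib (K + 1) - 1 - n with hm
  have href := shiftedSum_reflect_fib (m := m) (l := n) (k := K + 1) (by omega)
  rw [show -fibDist (K + 1) = fibDist K * gold by rw [fibDist_succ]; ring] at href
  have hlow := neg_sum_defect_le_shiftedSum K m (by omega) gold (by nlinarith) le_rfl
  have hnorm := (abs_le.1 (hN (K + 1) (by omega))).2
  rw [normSum] at hnorm
  push_cast at hnorm
  obtain ⟨j, hj⟩ : ∃ j, K = j + 1 := ⟨K - 1, by omega⟩
  have hpos : (0 : ℝ) < Nat.fib K := by exact_mod_cast Nat.fib_pos.2 (by omega)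
  have hlogn : Real.log (Nat.fib K) ≤ Real.log n := Real.log_le_log hpos (by exact_mod_cast hfib)
  have hlogfib : -Real.log 2 ≤ Real.log (Nat.fib K) + j * Real.log gold := by
    rw [← Real.log_pow, ← Real.log_mul hpos.ne' (by positivity), ← Real.log_inv]
    refine Real.log_le_log (by norm_num) ?_
    have := half_le_fib_succ_mul_gold_pow j
    rw [← hj] at this
    linarith
  have hKj : (K : ℝ) = j + 1 := by exact_mod_cast hj
  rw [hKj] at hnorm
  linarith [hC K]

lemma exists_le_shiftedSum : ∃ C : ℝ, ∃ᶠ n : ℕ in atTop, Real.log n - C ≤ shiftedSum n 0 := by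
  have hg := gold_pos
  obtain ⟨B, hB⟩ := exists_abs_normSum_le
  have htend : Tendsto (fun k => Nat.fib k - 1) atTop atTop := by
    refine tendsto_atTop_mono (f := fun k => k - 2) (fun k => ?_) (tendsto_sub_atTop_nat 2)
    have := Nat.le_fib_add_one k
    omega
  refine ⟨B, htend.frequently (Eventually.frequently ?_)⟩
  filter_upwards [hB, eventually_ge_atTop 3] with k hk hk3
  obtain ⟨j, rfl⟩ := Nat.exists_eq_add_of_le' (show 2 ≤ k by omega)
  have hfib1 : 2 ≤ Nat.fib (j + 2) := Nat.fib_mono (show 3 ≤ j + 2 by omega)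
  have hpos : (0 : ℝ) < Nat.fib (j + 2) := by exact_mod_cast (by omega : 0 < Nat.fib (j + 2))
  have hle : Real.log ((Nat.fib (j + 2) - 1 : ℕ) : ℝ) ≤ Real.log (Nat.fib (j + 2)) :=
    Real.log_le_log (by exact_mod_cast (by omega : 0 < Nat.fib (j + 2) - 1))
      (by exact_mod_cast Nat.sub_le _ _)
  have hlogfib : Real.log (Nat.fib (j + 2)) + (j + 2 : ℕ) * Real.log gold ≤ 0 := by
    rw [← Real.log_pow, ← Real.log_mul hpos.ne' (by positivity)]
    exact Real.log_nonpos (by positivity) ((fib_mul_gold_pow_le j).trans (by norm_num))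
  have hnorm := (abs_le.1 hk).1
  rw [normSum] at hnorm
  change _ ≤ fibSum (j + 2)
  linarith

lemma limsup_div_eq {u v : ℕ → ℝ} {a C C' : ℝ} (hv : Tendsto v atTop atTop)
    (hle : ∀ᶠ n in atTop, u n ≤ a * v n + C) (hge : ∃ᶠ n in atTop, a * v n - C' ≤ u n) :
    limsup (fun n => u n / v n) atTop = a := by
  have hup : ∀ ε > 0, ∀ᶠ n in atTop, u n / v n ≤ a + ε := by
    intro ε hε
    filter_upwards [hle, hv.eventually_gt_atTop 0, hv.eventually_ge_atTop (C / ε)] with n h1 h2 h3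
    rw [div_le_iff₀ h2]
    rw [div_le_iff₀ hε] at h3
    linarith
  have hdown : ∀ ε > 0, ∃ᶠ n in atTop, a - ε ≤ u n / v n := by
    intro ε hε
    refine (hge.and_eventually
      ((hv.eventually_gt_atTop 0).and (hv.eventually_ge_atTop (C' / ε)))).mono ?_
    rintro n ⟨h1, h2, h3⟩
    rw [le_div_iff₀ h2]
    rw [div_le_iff₀ hε] at h3
    linarith
  refine le_antisymm (le_of_forall_pos_le_add fun ε hε => ?_)
    (le_of_forall_pos_sub_le fun ε hε => ?_)
  · exact limsup_le_of_le (IsCoboundedUnder.of_frequently_ge (hdown 1 one_pos)) (hup ε hε)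
  · exact le_limsup_of_frequently_le (hdown ε hε) ⟨_, hup 1 one_pos⟩

end GoldenSudler

open GoldenSudler

/-- for the golden mean `α = (√5 - 1)/2` and
`Sℓ(n) = Σ_{j=1}^n log(2 - 2cos(2πjα))`, one has `limsup_{n→∞} Sℓ(n)/log(n) = 2`. -/
theorem stmt11 (α : ℝ) (hα : α = (Real.sqrt 5 - 1) / 2)
    (Sl : ℕ → ℝ)
    (hSl : ∀ n : ℕ, Sl n = ∑ j ∈ Finset.Icc 1 n,
      Real.log (2 - 2 * Real.cos (2 * Real.pi * j * α))) :
    limsup (fun n : ℕ => Sl n / Real.log n) atTop = 2 := by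
  have hα' : α = gold := hα
  have hsum : ∀ n, Sl n = 2 * shiftedSum n 0 := by
    intro n
    rw [hSl, shiftedSum, Finset.mul_sum]
    refine Finset.sum_congr rfl fun j _ => ?_
    rw [hα', add_zero, ← log_two_sub_two_mul_cos, mul_assoc (2 * Real.pi)]
  obtain ⟨C, hC⟩ := exists_shiftedSum_le
  obtain ⟨C', hC'⟩ := exists_le_shiftedSum
  refine limsup_div_eq (C := 2 * C) (C' := 2 * C')
    (Real.tendsto_log_atTop.comp tendsto_natCast_atTop_atTop) ?_ ?_
  · filter_upwards [hC] with n hn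
    rw [hsum]
    linarith
  · refine hC'.mono fun n hn => ?_
    rw [hsum]
    linarith
end
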